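/- Let T be a theory of unital C*-algebras. The minimal tensor norm predicate P^min is T-definable if and only if: for all families (A_i)_{i∈I} of models of T, all ultrafilters U on I, and all n ≥ 1, P^min_{∏_U A_i, n} = lim_U P^min_{A_i, n}. Moreover, in this case each P^min_n is T-equivalent to a quantifier-free T-formula. -/

import Mathlib

/-!
Formulas commute with ultraproducts (Łoś's theorem, `IsCStarUltraproduct.tendsto_interp`), and this
property passes to uniform limits of formulas over models of `T`. Ultraproducts of models are again
models, so a definable `P^min` commutes with ultraproducts
(`MinDefinableOver.minUltraContinuous`).

For the converse, the key fact is that the minimal norm of `∑ a k ⊗ b k` depends only on the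
C*-algebra generated by the tuples `a` and `b`, hence only on the norms of the *-polynomials in
them (`minNorm_eq_of_norm_eval_eq`). This rests on the invariance of the minimal norm under
injective *-homomorphisms (`minNorm_tensorHom`), proved as follows.

* The supremum over all product states of the norms in their GNS representations is a C*-norm, the
  spatial norm (`isCStarNorm_spatialNorm`).
* Product states are contractive for every C*-norm (Takesaki, `IsCStarNorm.norm_tf_le`). The proof
  avoids irreducible representations and pure states: any state can be replaced, without losing
  more than `δ` in its value at a given selfadjoint element, by one that is excised on finitely many
  prescribed elements, i.e. `e a e ≈ φ(a) e²` for a contraction `e` with `‖e²‖ = 1` (`excision`).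
* Consequently the spatial norm is the least C*-norm. For injective `C → A` and `D → B` the
  restriction of a product state of `A ⊗ B`, and each of its GNS coefficients, is a combination of
  product states of `C ⊗ D`, hence bounded for every C*-norm on `C ⊗ D`. A *-representation whose
  coefficients are bounded is contractive, so the spatial norm of `A ⊗ B` restricts to the least
  C*-norm on `C ⊗ D` (`IsCStarNorm.spatialNorm_tensorHom_le`, `minNorm_eq_spatialNorm`).

If now `P^min` commutes with ultraproducts, a compactness argument shows that, for each `n` and `ε`,
the norms of finitely many *-polynomials control `P^min_n` up to `ε` uniformly over the models of
`T` (`ModelTuple.exists_control`): otherwise two families of tuples would have limits, in two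
ultraproducts, with the same *-polynomial norms but different minimal norms. McShane's extension
formula turns this control into a continuous function of finitely many norms of *-polynomials,
which is a quantifier-free formula (`ModelTuple.exists_isQF`).
-/

open scoped TensorProduct
open Filter Topology Function

noncomputable section

/-- The star operation on the algebraic tensor product `A ⊗[ℂ] B` of two complex
C*-algebras, determined by `star (a ⊗ b) = star a ⊗ star b`. -/
def tensorStar (A B : Type) [CStarAlgebra A] [CStarAlgebra B] :
    A ⊗[ℂ] B →+ A ⊗[ℂ] B :=
  TensorProduct.liftAddHom
    { toFun := fun a =>
        { toFun := fun b => star a ⊗ₜ[ℂ] star b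
          map_zero' := by simp
          map_add' := fun b b' => by simp [star_add, TensorProduct.tmul_add] }
      map_zero' := by ext b; simp
      map_add' := fun a a' => by ext b; simp [star_add, TensorProduct.add_tmul] }
    (fun c a b => by
      simp [star_smul, TensorProduct.smul_tmul, TensorProduct.tmul_smul])

/-- A C*-norm on the algebraic tensor product `A ⊗[ℂ] B`: a submultiplicative,
star-invariant norm satisfying the C*-identity (so that the completion with respect to it
is a C*-algebra). -/
structure IsCStarNorm {A B : Type} [CStarAlgebra A] [CStarAlgebra B]
    (nu : A ⊗[ℂ] B → ℝ) : Prop where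
  eq_zero_iff : ∀ x, nu x = 0 ↔ x = 0
  nonneg : ∀ x, 0 ≤ nu x
  add_le : ∀ x y, nu (x + y) ≤ nu x + nu y
  smul_eq : ∀ (c : ℂ) x, nu (c • x) = ‖c‖ * nu x
  mul_le : ∀ x y, nu (x * y) ≤ nu x * nu y
  star_eq : ∀ x, nu (tensorStar A B x) = nu x
  cstar : ∀ x, nu (tensorStar A B x * x) = nu x ^ 2

/-- The minimal tensor norm on `A ⊗[ℂ] B`: by Takesaki's theorem, the minimal C*-norm
on the algebraic tensor product. -/
def minNorm (A B : Type) [CStarAlgebra A] [CStarAlgebra B] (x : A ⊗[ℂ] B) : ℝ :=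
  sInf {r : ℝ | ∃ nu : A ⊗[ℂ] B → ℝ, IsCStarNorm nu ∧ r = nu x}

/-- A family of elements of C*-algebras is (uniformly norm-)bounded. -/
def Bdd {I : Type} {A : I → Type} [∀ i, CStarAlgebra (A i)] (f : ∀ i, A i) : Prop :=
  ∃ M : ℝ, ∀ i, ‖f i‖ ≤ M

/-- `π : (∀ i, A i) → B` realizes `B` as the C*-algebra ultraproduct `∏_U A_i`, i.e. as
the quotient of the ℓ∞-product of the `A i` by the ideal of bounded families whose norms
tend to `0` along `U`:  `π` is a unital *-homomorphism on bounded families, every element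
of `B` lifts to a bounded family (with control of norms), and the norm of `π f` is the
`U`-limit of the norms `‖f i‖`.  This data determines `B` uniquely up to isometric
*-isomorphism. -/
structure IsCStarUltraproduct {I : Type} (U : Ultrafilter I) (A : I → Type)
    [∀ i, CStarAlgebra (A i)] (B : Type) [CStarAlgebra B]
    (π : (∀ i, A i) → B) : Prop where
  map_one : π 1 = 1
  map_add : ∀ f g, Bdd f → Bdd g → π (f + g) = π f + π g
  map_mul : ∀ f g, Bdd f → Bdd g → π (f * g) = π f * π g
  map_star : ∀ f, Bdd f → π (star f) = star (π f)
  map_smul : ∀ (c : ℂ) f, Bdd f → π (c • f) = c • π f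
  norm_eq : ∀ f, Bdd f → Tendsto (fun i => ‖f i‖) (U : Filter I) (nhds ‖π f‖)
  surj : ∀ b : B, ∃ f, (∀ i, ‖f i‖ ≤ ‖b‖) ∧ π f = b

/-- *-polynomial terms in `n` variables over `ℂ`: the terms of the continuous-logic
language of (unital) C*-algebras. -/
inductive CTerm : ℕ → Type
  | var {n : ℕ} : Fin n → CTerm n
  | one {n : ℕ} : CTerm n
  | add {n : ℕ} : CTerm n → CTerm n → CTerm n
  | mul {n : ℕ} : CTerm n → CTerm n → CTerm n
  | star {n : ℕ} : CTerm n → CTerm n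
  | smul {n : ℕ} : ℂ → CTerm n → CTerm n

/-- Evaluation of a *-polynomial term in a C*-algebra. -/
def CTerm.eval {A : Type} [CStarAlgebra A] : ∀ {n : ℕ}, CTerm n → (Fin n → A) → A
  | _, CTerm.var i, a => a i
  | _, CTerm.one, _ => 1
  | _, CTerm.add s t, a => CTerm.eval s a + CTerm.eval t a
  | _, CTerm.mul s t, a => CTerm.eval s a * CTerm.eval t a
  | _, CTerm.star t, a => Star.star (CTerm.eval t a)
  | _, CTerm.smul c t, a => c • CTerm.eval t a

/-- Formulas of the continuous-logic language of (unital) C*-algebras in `n` free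
variables (all variables ranging over the closed unit ball): atomic formulas `‖t‖` for
*-polynomial terms `t`, closed under continuous combinations and the quantifiers
`sup` and `inf` over the unit ball. -/
inductive Formula : ℕ → Type
  | atom {n : ℕ} : CTerm n → Formula n
  | comb {n k : ℕ} (u : (Fin k → ℝ) → ℝ) (hu : Continuous u)
      (phis : Fin k → Formula n) : Formula n
  | sup {n : ℕ} : Formula (n + 1) → Formula n
  | inf {n : ℕ} : Formula (n + 1) → Formula n

/-- The interpretation of a formula in a (unital) C*-algebra, the quantified variables
ranging over the closed unit ball. -/
def Formula.interp (A : Type) [CStarAlgebra A] :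
    ∀ {n : ℕ}, Formula n → (Fin n → A) → ℝ
  | _, Formula.atom t, a => ‖t.eval a‖
  | _, Formula.comb u _ phis, a => u fun j => (phis j).interp A a
  | _, Formula.sup phi, a => ⨆ b : {x : A // ‖x‖ ≤ 1}, phi.interp A (Fin.snoc a b.1)
  | _, Formula.inf phi, a => ⨅ b : {x : A // ‖x‖ ≤ 1}, phi.interp A (Fin.snoc a b.1)

/-- A sentence is a formula with no free variables. -/
abbrev Sentence := Formula 0

/-- A theory of (unital) C*-algebras: a set of sentences, each imposed as the condition
`σ = 0`. -/
abbrev CStarTheory := Set Sentence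

/-- `A` is a model of the theory `T`. -/
def Models (A : Type) [CStarAlgebra A] (T : CStarTheory) : Prop :=
  ∀ σ ∈ T, σ.interp A finZeroElim = 0

/-- Quantifier-free formulas: those built without the quantifiers `sup` and `inf`. -/
inductive Formula.IsQF : ∀ {n : ℕ}, Formula n → Prop
  | atom {n : ℕ} (t : CTerm n) : (Formula.atom t).IsQF
  | comb {n k : ℕ} (u : (Fin k → ℝ) → ℝ) (hu : Continuous u) (phis : Fin k → Formula n) :
      (∀ j, (phis j).IsQF) → (Formula.comb u hu phis).IsQF

/-- The minimal tensor norm predicate `P^min` is `T`-definable: for each `n`, the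
`T`-function `(a, b) ↦ ‖Σ a_k ⊗ b_k‖_min` (on `2n`-tuples from the unit ball) is realized
by a `T`-formula, i.e. it is a uniform-over-models-of-`T` limit of interpretations of
formulas. -/
def MinDefinableOver (T : CStarTheory) : Prop :=
  ∀ (n : ℕ) (ε : ℝ), 0 < ε → ∃ phi : Formula (n + n),
    ∀ (A : Type) [CStarAlgebra A], Models A T →
      ∀ a b : Fin n → A, (∀ k, ‖a k‖ ≤ 1) → (∀ k, ‖b k‖ ≤ 1) →
        |minNorm A A (∑ k, a k ⊗ₜ[ℂ] b k) - phi.interp A (Fin.append a b)| ≤ ε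

/-- For all families `(A i)` of models of `T` and all ultrafilters `U`,
`P^min_{∏_U A_i, n} = lim_U P^min_{A_i, n}` for all `n` (where tuples from the unit ball
of the ultraproduct are identified with `U`-limits of unit-ball tuples from the `A i`). -/
def MinUltraContinuous (T : CStarTheory) : Prop :=
  ∀ (I : Type) (U : Ultrafilter I) (A : I → Type) [∀ i, CStarAlgebra (A i)],
    (∀ i, Models (A i) T) →
    ∀ (B : Type) [CStarAlgebra B] (π : (∀ i, A i) → B), IsCStarUltraproduct U A B π →
    ∀ (n : ℕ) (f g : Fin n → ∀ i, A i),
      (∀ k i, ‖f k i‖ ≤ 1) → (∀ k i, ‖g k i‖ ≤ 1) →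
      Tendsto (fun i => minNorm (A i) (A i) (∑ k, f k i ⊗ₜ[ℂ] g k i)) (U : Filter I)
        (nhds (minNorm B B (∑ k, π (f k) ⊗ₜ[ℂ] π (g k))))

/-! ### Positive functionals on *-algebras -/

set_option linter.unusedSectionVars false

section PositiveFunctionals

theorem le_of_sq_le_sq_of_nonneg {a b : ℝ} (h : a ^ 2 ≤ b ^ 2) (hb : 0 ≤ b) : a ≤ b :=
  (le_abs_self a).trans (abs_le_of_sq_le_sq h hb)

variable {R : Type} [Ring R] [StarRing R] [Algebra ℂ R] [StarModule ℂ R]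

/-- A linear functional `F` on a complex *-algebra is positive if `F (x* x)` is a nonnegative
real number for every `x`. -/
def PosFun (F : R →ₗ[ℂ] ℂ) : Prop :=
  ∀ x, 0 ≤ (F (star x * x)).re ∧ (F (star x * x)).im = 0

/-- A state: a positive functional normalised by `F 1 = 1`. -/
def IsState (F : R →ₗ[ℂ] ℂ) : Prop := PosFun F ∧ F 1 = 1

/-- The seminorm `x ↦ F (x* x)^{1/2}` attached to a positive functional. -/
def pF (F : R →ₗ[ℂ] ℂ) (x : R) : ℝ := √(F (star x * x)).re

theorem PosFun.conj_symm {F : R →ₗ[ℂ] ℂ} (hF : PosFun F) (x y : R) :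
    (starRingEnd ℂ) (F (star y * x)) = F (star x * y) := by
  have h1 := (hF (x + y)).2
  have h2 := (hF (x + Complex.I • y)).2
  have hx := (hF x).2
  have hy := (hF y).2
  simp only [star_add, add_mul, mul_add, map_add, Complex.add_im, star_smul, map_smul,
    smul_mul_assoc, mul_smul_comm, smul_eq_mul, Complex.mul_im, Complex.mul_re, Complex.I_re,
    Complex.I_im, RCLike.star_def, Complex.conj_I, Complex.neg_re, Complex.neg_im] at h1 h2
  apply Complex.ext
  · simp only [Complex.conj_re]
    linarith
  · simp only [Complex.conj_im]
    linarith

/-- The semi-inner product `⟨x, y⟩ = F (x* y)` of a positive functional. -/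
@[reducible] def PosFun.core {F : R →ₗ[ℂ] ℂ} (hF : PosFun F) : PreInnerProductSpace.Core ℂ R where
  inner x y := F (star x * y)
  conj_inner_symm x y := hF.conj_symm x y
  re_inner_nonneg x := (hF x).1
  add_left x y z := by simp [star_add, add_mul]
  smul_left x y r := by simp [star_smul]

theorem pF_nonneg (F : R →ₗ[ℂ] ℂ) (x : R) : 0 ≤ pF F x := Real.sqrt_nonneg _

theorem PosFun.pF_sq {F : R →ₗ[ℂ] ℂ} (hF : PosFun F) (x : R) :
    pF F x ^ 2 = (F (star x * x)).re := Real.sq_sqrt (hF x).1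

theorem PosFun.cauchy {F : R →ₗ[ℂ] ℂ} (hF : PosFun F) (x y : R) :
    ‖F (star x * y)‖ ≤ pF F x * pF F y := by
  let _ := hF.core
  have h := InnerProductSpace.Core.inner_mul_inner_self_le (𝕜 := ℂ) x y
  have h' : ‖F (star x * y)‖ * ‖F (star y * x)‖ ≤
    (F (star x * x)).re * (F (star y * y)).re := h
  rw [← hF.conj_symm x y, RCLike.norm_conj] at *
  rw [← hF.pF_sq, ← hF.pF_sq] at h'
  refine le_of_sq_le_sq_of_nonneg ?_ (mul_nonneg (pF_nonneg _ _) (pF_nonneg _ _))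
  nlinarith

theorem PosFun.cauchy_one {F : R →ₗ[ℂ] ℂ} (hF : PosFun F) (x : R) :
    ‖F x‖ ≤ pF F 1 * pF F x := by
  simpa using hF.cauchy 1 x

theorem PosFun.pF_add {F : R →ₗ[ℂ] ℂ} (hF : PosFun F) (x y : R) :
    pF F (x + y) ≤ pF F x + pF F y := by
  refine le_of_sq_le_sq_of_nonneg ?_ (add_nonneg (pF_nonneg _ _) (pF_nonneg _ _))
  have e : pF F (x + y) ^ 2 = pF F x ^ 2 + (F (star x * y)).re + (F (star y * x)).re
      + pF F y ^ 2 := by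
    rw [hF.pF_sq, hF.pF_sq, hF.pF_sq]
    simp [star_add, add_mul, mul_add]
    ring
  have h1 := (Complex.re_le_norm _).trans (hF.cauchy x y)
  have h2 := (Complex.re_le_norm _).trans (hF.cauchy y x)
  rw [e]
  nlinarith

theorem PosFun.pF_smul {F : R →ₗ[ℂ] ℂ} (hF : PosFun F) (c : ℂ) (x : R) :
    pF F (c • x) = ‖c‖ * pF F x := by
  have : pF F (c • x) ^ 2 = (‖c‖ * pF F x) ^ 2 := by
    rw [mul_pow, hF.pF_sq, hF.pF_sq, star_smul, smul_mul_smul_comm, map_smul, smul_eq_mul]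
    have : star c * c = ((‖c‖ ^ 2 : ℝ) : ℂ) := by
      rw [RCLike.star_def, Complex.conj_mul']
      push_cast; rfl
    rw [this, Complex.re_ofReal_mul]
  exact (sq_eq_sq₀ (pF_nonneg _ _) (mul_nonneg (norm_nonneg _) (pF_nonneg _ _))).1 this

theorem PosFun.apply_star {F : R →ₗ[ℂ] ℂ} (hF : PosFun F) (x : R) :
    F (star x) = (starRingEnd ℂ) (F x) := by
  have := hF.conj_symm x 1
  simp at this
  exact this.symm

theorem PosFun.im_eq_zero {F : R →ₗ[ℂ] ℂ} (hF : PosFun F) {x : R} (hx : IsSelfAdjoint x) :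
    (F x).im = 0 := by
  have := hF.apply_star x
  rw [hx.star_eq] at this
  exact Complex.conj_eq_iff_im.1 this.symm

/-- The functional `z ↦ F (y* z y)`. -/
def conjFun (F : R →ₗ[ℂ] ℂ) (y : R) : R →ₗ[ℂ] ℂ :=
  F ∘ₗ LinearMap.mulLeft ℂ (star y) ∘ₗ LinearMap.mulRight ℂ y

@[simp]
theorem conjFun_apply (F : R →ₗ[ℂ] ℂ) (y z : R) : conjFun F y z = F (star y * (z * y)) := rfl

theorem PosFun.conjFun {F : R →ₗ[ℂ] ℂ} (hF : PosFun F) (y : R) : PosFun (conjFun F y) := by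
  intro x
  have := hF (x * y)
  simpa [mul_assoc] using this

theorem PosFun.comp {S : Type} [Ring S] [StarRing S] [Algebra ℂ S] {F : R →ₗ[ℂ] ℂ}
    (hF : PosFun F) (f : S →ₗ[ℂ] R) (hf : ∀ x, f (star x * x) = star (f x) * f x) :
    PosFun (F ∘ₗ f) := by
  intro x
  simpa [hf] using hF (f x)

/-- A positive functional dominated by a multiple of a C*-seminorm `ν` satisfies
`F (z* z) ≤ F 1 * ν (z)^2`: iterating Cauchy–Schwarz gives
`F (h) ^ 2^k ≤ F (1) ^ (2^k - 1) * F (h ^ 2^k)` for `h = z* z`, and the constant disappears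
in the limit. -/
theorem PosFun.bound {F : R →ₗ[ℂ] ℂ} (hF : PosFun F) {ν : R → ℝ} (h0 : ∀ x, 0 ≤ ν x)
    (hC : ∀ x, ν (star x * x) = ν x ^ 2)
    {C : ℝ} (hb : ∀ x, ‖F x‖ ≤ C * ν x) (z : R) :
    pF F z ≤ pF F 1 * ν z := by
  set h := star z * z with hh
  have hsa : IsSelfAdjoint h := IsSelfAdjoint.star_mul_self z
  set s := pF F 1 with hs
  have hs0 : 0 ≤ s := pF_nonneg _ _
  have hν : ∀ k, ν (h ^ 2 ^ k) = ν h ^ 2 ^ k := by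
    intro k
    induction k with
    | zero => simp
    | succ k ih =>
      have := hC (h ^ 2 ^ k)
      rw [(hsa.pow _).star_eq, ← pow_add, ← two_mul, ← pow_succ', ih, ← pow_mul] at this
      rw [this, pow_succ]
  have hstep : ∀ x : R, IsSelfAdjoint x → ‖F x‖ ^ 2 ≤ s ^ 2 * ‖F (x ^ 2)‖ := by
    intro x hx
    have h1 := hF.cauchy_one x
    have h2 : pF F x ^ 2 ≤ ‖F (x ^ 2)‖ := by
      rw [hF.pF_sq, hx.star_eq, ← sq]
      exact Complex.re_le_norm _
    calc ‖F x‖ ^ 2 ≤ (s * pF F x) ^ 2 := by gcongr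
      _ = s ^ 2 * pF F x ^ 2 := by ring
      _ ≤ _ := by gcongr
  have hit : ∀ k, ‖F h‖ ^ 2 ^ k * s ^ 2 ≤ (s ^ 2) ^ 2 ^ k * ‖F (h ^ 2 ^ k)‖ := by
    intro k
    induction k with
    | zero => simp [mul_comm]
    | succ k ih =>
      rcases hs0.eq_or_lt with hs' | hs'
      · simp [← hs']
      have h1 := hstep (h ^ 2 ^ k) (hsa.pow _)
      rw [← pow_mul, ← pow_succ] at h1
      have h2 : (‖F h‖ ^ 2 ^ k * s ^ 2) ^ 2 ≤ ((s ^ 2) ^ 2 ^ k * ‖F (h ^ 2 ^ k)‖) ^ 2 := by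
        gcongr
      have h3 : ((s ^ 2) ^ 2 ^ k * ‖F (h ^ 2 ^ k)‖) ^ 2 ≤
          ((s ^ 2) ^ 2 ^ k) ^ 2 * (s ^ 2 * ‖F (h ^ 2 ^ (k + 1))‖) := by
        rw [mul_pow]; gcongr
      have h4 := h2.trans h3
      have e1 : ‖F h‖ ^ 2 ^ (k + 1) = (‖F h‖ ^ 2 ^ k) ^ 2 := by rw [pow_succ, pow_mul]
      have e2 : (s ^ 2) ^ 2 ^ (k + 1) = ((s ^ 2) ^ 2 ^ k) ^ 2 := by
        rw [pow_succ 2 k, pow_mul (s ^ 2) (2 ^ k) 2]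
      rw [e1, e2]
      have hs2 : 0 < s ^ 2 := by positivity
      refine le_of_mul_le_mul_left ?_ hs2
      nlinarith
  have hfin : ‖F h‖ ≤ s ^ 2 * ν h := by
    by_contra hlt
    push Not at hlt
    set a := s ^ 2 * ν h with ha
    have ha0 : 0 ≤ a := mul_nonneg (sq_nonneg _) (h0 _)
    have hFpos : 0 < ‖F h‖ := ha0.trans_lt hlt
    have hspos : 0 < s ^ 2 := by
      rcases (sq_nonneg s).eq_or_lt with h | h
      · exfalso
        have := hstep _ hsa
        rw [← h] at this
        nlinarith
      · exact h
    have key : ∀ k : ℕ, ‖F h‖ ^ 2 ^ k * s ^ 2 ≤ C * a ^ 2 ^ k := by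
      intro k
      refine (hit k).trans ?_
      rw [ha, mul_pow, ← hν]
      nlinarith [mul_le_mul_of_nonneg_left (hb (h ^ 2 ^ k)) (pow_nonneg hspos.le (2 ^ k))]
    have t1 : Tendsto (fun k : ℕ => (a / ‖F h‖) ^ 2 ^ k) atTop (𝓝 0) :=
      (tendsto_pow_atTop_nhds_zero_of_lt_one (by positivity)
        ((div_lt_one hFpos).2 hlt)).comp (tendsto_pow_atTop_atTop_of_one_lt one_lt_two)
    have t2 : Tendsto (fun k : ℕ => C * (a / ‖F h‖) ^ 2 ^ k) atTop (𝓝 0) := by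
      simpa using t1.const_mul C
    have : s ^ 2 ≤ 0 := by
      refine ge_of_tendsto' t2 fun k => ?_
      rw [div_pow, ← mul_div_assoc, le_div_iff₀ (by positivity)]
      linarith [key k]
    linarith
  refine le_of_sq_le_sq_of_nonneg ?_ (mul_nonneg hs0 (h0 _))
  rw [hF.pF_sq, mul_pow, ← hC]
  exact (Complex.re_le_norm _).trans hfin

end PositiveFunctionals

/-! ### States of C*-algebras -/

section States

variable {A : Type} [CStarAlgebra A]

/-- `‖a‖² - a* a` is positive, hence of the form `c* c`. -/
theorem exists_norm_sq_sub (a : A) :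
    ∃ c : A, ((‖a‖ ^ 2 : ℝ) : ℂ) • (1 : A) - star a * a = star c * c := by
  let _ := CStarAlgebra.spectralOrder A
  have := CStarAlgebra.spectralOrderedRing A
  have h : star a * a ≤ algebraMap ℝ A (‖a‖ ^ 2) := CStarAlgebra.star_mul_le_algebraMap_norm_sq
  obtain ⟨c, hc⟩ := CStarAlgebra.nonneg_iff_eq_star_mul_self.1 (sub_nonneg.2 h)
  refine ⟨c, ?_⟩
  rw [← hc, Algebra.algebraMap_eq_smul_one, Complex.coe_smul]

/-- A contractive functional with `F 1 = 1` is real on self-adjoint elements: compare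
`|F (h + i t)|²` with `‖h + i t‖² = ‖h²+ t²‖` for large real `t`. -/
theorem im_eq_zero_of_contractive {F : A →ₗ[ℂ] ℂ} (h1 : F 1 = 1) (hF : ∀ a, ‖F a‖ ≤ ‖a‖)
    {h : A} (hh : IsSelfAdjoint h) : (F h).im = 0 := by
  have key : ∀ t : ℝ, ((F h).im + t) ^ 2 ≤ ‖h‖ ^ 2 + t ^ 2 * ‖(1 : A)‖ := by
    intro t
    set x : A := h + (Complex.I * t) • (1 : A) with hx
    have e1 : star x * x = h * h + ((t ^ 2 : ℝ) : ℂ) • (1 : A) := by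
      have e0 : star x = h - (Complex.I * t) • (1 : A) := by
        simp [hx, hh.star_eq, star_smul, sub_eq_add_neg]
      rw [e0, hx]
      simp only [sub_mul, mul_add, smul_mul_assoc, mul_smul_comm, one_mul, mul_one, smul_sub,
        smul_smul]
      have : (Complex.I * t) * (Complex.I * t) = -((t ^ 2 : ℝ) : ℂ) := by
        push_cast
        linear_combination (t : ℂ) ^ 2 * Complex.I_sq
      rw [this, neg_smul]
      abel
    have e2 : ‖x‖ ^ 2 ≤ ‖h‖ ^ 2 + t ^ 2 * ‖(1 : A)‖ := by
      rw [sq, ← CStarRing.norm_star_mul_self, e1]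
      refine (norm_add_le _ _).trans (add_le_add ?_ ?_)
      · rw [sq]; exact norm_mul_le _ _
      · rw [norm_smul, Complex.norm_real, Real.norm_of_nonneg (sq_nonneg t)]
    have e3 : (F x).im = (F h).im + t := by simp [hx, h1]
    rw [← e3]
    refine le_trans ?_ e2
    refine le_trans ?_ (pow_le_pow_left₀ (norm_nonneg _) (hF x) 2)
    rw [← sq_abs]
    exact pow_le_pow_left₀ (abs_nonneg _) (Complex.abs_im_le_norm _) 2
  have hone : ‖(1 : A)‖ ≤ 1 := by
    rcases subsingleton_or_nontrivial A with hA | hA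
    · rw [Subsingleton.elim (1 : A) 0, norm_zero]; exact zero_le_one
    · exact CStarRing.norm_one.le
  by_contra hne
  have h2 := key ((‖h‖ ^ 2 + 1) / (F h).im)
  have h3 : ((F h).im) * ((‖h‖ ^ 2 + 1) / (F h).im) = ‖h‖ ^ 2 + 1 := by field_simp
  nlinarith [sq_nonneg ((F h).im), sq_nonneg ((‖h‖ ^ 2 + 1) / (F h).im), sq_nonneg ‖h‖]

theorem isState_of_contractive {F : A →ₗ[ℂ] ℂ} (h1 : F 1 = 1) (hF : ∀ a, ‖F a‖ ≤ ‖a‖) :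
    IsState F := by
  refine ⟨fun a => ⟨?_, im_eq_zero_of_contractive h1 hF (IsSelfAdjoint.star_mul_self a)⟩, h1⟩
  let _ := CStarAlgebra.spectralOrder A
  have := CStarAlgebra.spectralOrderedRing A
  set h := star a * a
  have hh : 0 ≤ h := star_mul_self_nonneg a
  have h2 : h ≤ algebraMap ℝ A ‖h‖ := (CStarAlgebra.norm_le_iff_le_algebraMap h (norm_nonneg _)).1 le_rfl
  have h3 : ‖algebraMap ℝ A ‖h‖ - h‖ ≤ ‖h‖ :=
    (CStarAlgebra.norm_le_iff_le_algebraMap _ (norm_nonneg _) (sub_nonneg.2 h2)).2 (by simpa using hh)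
  have h4 := (Complex.re_le_norm _).trans ((hF _).trans h3)
  rw [Algebra.algebraMap_eq_smul_one, ← Complex.coe_smul] at h4
  simp [h1] at h4
  exact h4

/-- Every spectral value of a self-adjoint element is attained by a state: extend a character of
the commutative C*-algebra generated by the element by Hahn–Banach. -/
theorem exists_state_of_mem_spectrum [Nontrivial A] {h : A} (hh : IsSelfAdjoint h) {z : ℂ}
    (hz : z ∈ spectrum ℂ h) : ∃ F : A →ₗ[ℂ] ℂ, IsState F ∧ F h = z := by
  have hn : IsStarNormal h := hh.isStarNormal
  let S := StarAlgebra.elemental ℂ h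
  let x : S := ⟨h, StarAlgebra.elemental.self_mem ℂ h⟩
  have hx : z ∈ spectrum ℂ x := by
    have := StarSubalgebra.spectrum_eq (S := S) (hS := StarAlgebra.elemental.isClosed ℂ h) (a := x)
    rw [this]; exact hz
  obtain ⟨χ, hχ⟩ := WeakDual.CharacterSpace.mem_spectrum_iff_exists.1 hx
  obtain ⟨g, hg, hgn⟩ := exists_extension_norm_eq (𝕜 := ℂ) (E := A)
    (Subalgebra.toSubmodule S.toSubalgebra) (WeakDual.toStrongDual (χ : WeakDual ℂ S))
  have hχn : ‖WeakDual.toStrongDual (χ : WeakDual ℂ S)‖ ≤ 1 :=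
    WeakDual.CharacterSpace.norm_le_norm_one χ |>.trans (by simp)
  refine ⟨g.toLinearMap, isState_of_contractive ?_ ?_, ?_⟩
  · have := hg (1 : S)
    refine this.trans ?_
    exact map_one χ
  · intro a
    refine (g.le_opNorm a).trans ?_
    rw [hgn]
    exact mul_le_of_le_one_left (norm_nonneg _) hχn
  · exact (hg x).trans hχ

/-- The norm of a self-adjoint element is attained by a state. -/
theorem exists_state_norm [Nontrivial A] {h : A} (hh : IsSelfAdjoint h) :
    ∃ F : A →ₗ[ℂ] ℂ, IsState F ∧ ‖F h‖ = ‖h‖ := by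
  rcases CStarAlgebra.norm_or_neg_norm_mem_spectrum (a := h) hh with h1 | h1
  · rw [← spectrum.algebraMap_mem_iff ℂ] at h1
    obtain ⟨F, hF, hF'⟩ := exists_state_of_mem_spectrum hh h1
    exact ⟨F, hF, by simp [hF']⟩
  · rw [← spectrum.algebraMap_mem_iff ℂ] at h1
    obtain ⟨F, hF, hF'⟩ := exists_state_of_mem_spectrum hh h1
    exact ⟨F, hF, by simp [hF']⟩

theorem exists_state_ne_zero {a : A} (ha : a ≠ 0) : ∃ F : A →ₗ[ℂ] ℂ, IsState F ∧ F a ≠ 0 := by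
  have : Nontrivial A := ⟨a, 0, ha⟩
  by_contra hcon
  push Not at hcon
  apply ha
  have hs : ∀ h : A, IsSelfAdjoint h → (∀ F : A →ₗ[ℂ] ℂ, IsState F → F h = 0) → h = 0 := by
    intro h hh hF
    obtain ⟨F, h1, h2⟩ := exists_state_norm hh
    rw [hF F h1, norm_zero] at h2
    exact norm_eq_zero.1 h2.symm
  have h1 : a + star a = 0 := hs _ (IsSelfAdjoint.add_star_self a) fun F hF => by
    rw [map_add, hF.1.apply_star, hcon F hF]; simp
  have h2 : Complex.I • (a - star a) = 0 := by
    refine hs _ ?_ fun F hF => by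
      rw [map_smul, map_sub, hF.1.apply_star, hcon F hF]; simp
    rw [IsSelfAdjoint, star_smul, star_sub, star_star, RCLike.star_def, Complex.conj_I, neg_smul,
      ← smul_neg, neg_sub]
  have h3 : a - star a = 0 := (smul_eq_zero.1 h2).resolve_left Complex.I_ne_zero
  have h4 : (2 : ℂ) • a = 0 := by
    have : (2 : ℂ) • a = (a + star a) + (a - star a) := by rw [two_smul]; abel
    rw [this, h1, h3, add_zero]
  exact (smul_eq_zero.1 h4).resolve_left two_ne_zero

theorem PosFun.norm_sq_le {F : A →ₗ[ℂ] ℂ} (hF : PosFun F) (a : A) :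
    (F (star a * a)).re ≤ ‖a‖ ^ 2 * (F 1).re := by
  obtain ⟨c, hc⟩ := exists_norm_sq_sub a
  have h := (hF c).1
  rw [← hc, map_sub, map_smul, smul_eq_mul, Complex.sub_re, Complex.re_ofReal_mul] at h
  linarith

theorem IsState.norm_le {F : A →ₗ[ℂ] ℂ} (hF : IsState F) (a : A) : ‖F a‖ ≤ ‖a‖ := by
  have h1 := hF.1.cauchy_one a
  have h2 : pF F 1 = 1 := by simp [pF, hF.2]
  have h3 : pF F a ^ 2 ≤ ‖a‖ ^ 2 := by
    rw [hF.1.pF_sq]; simpa [hF.2] using hF.1.norm_sq_le a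
  rw [h2, one_mul] at h1
  exact h1.trans (le_of_sq_le_sq_of_nonneg h3 (norm_nonneg _))

end States

/-! ### Product functionals on the algebraic tensor product -/

section ProductFunctionals

variable {A B : Type} [CStarAlgebra A] [CStarAlgebra B]

theorem tensorStar_eq (x : A ⊗[ℂ] B) : tensorStar A B x = star x := by
  induction x using TensorProduct.induction_on with
  | zero => simp
  | tmul a b => rfl
  | add x y hx hy => rw [map_add, hx, hy, star_add]

/-- The product functional `φ ⊗ ψ` on the algebraic tensor product. -/
def tf (φ : A →ₗ[ℂ] ℂ) (ψ : B →ₗ[ℂ] ℂ) : A ⊗[ℂ] B →ₗ[ℂ] ℂ :=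
  LinearMap.mul' ℂ ℂ ∘ₗ TensorProduct.map φ ψ

@[simp]
theorem tf_tmul (φ : A →ₗ[ℂ] ℂ) (ψ : B →ₗ[ℂ] ℂ) (a : A) (b : B) :
    tf φ ψ (a ⊗ₜ b) = φ a * ψ b := rfl

open scoped ComplexOrder in
theorem PosFun.gram {R : Type} [Ring R] [StarRing R] [Algebra ℂ R] [StarModule ℂ R]
    {φ : R →ₗ[ℂ] ℂ} (hφ : PosFun φ) {n : ℕ} (a : Fin n → R) :
    (Matrix.of fun k l => φ (star (a k) * a l)).PosSemidef := by
  refine Matrix.PosSemidef.of_dotProduct_mulVec_nonneg ?_ fun x => ?_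
  · ext k l
    simpa [Matrix.conjTranspose_apply] using hφ.conj_symm (a k) (a l)
  · have e : star x ⬝ᵥ (Matrix.of fun k l => φ (star (a k) * a l)).mulVec x =
        φ (star (∑ k, x k • a k) * ∑ k, x k • a k) := by
      simp only [dotProduct, Matrix.mulVec, Matrix.of_apply, star_sum, Finset.sum_mul,
        Finset.mul_sum, map_sum, star_smul, smul_mul_assoc, mul_smul_comm, map_smul, smul_eq_mul,
        Pi.star_apply]
      rw [Finset.sum_comm]
      refine Finset.sum_congr rfl fun i _ => Finset.sum_congr rfl fun j _ => ?_
      ring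
    rw [e, Complex.nonneg_iff]
    exact ⟨(hφ _).1, (hφ _).2.symm⟩

open scoped ComplexOrder in
/-- A product of positive functionals is positive, by the Schur product theorem. -/
theorem PosFun.tf {φ : A →ₗ[ℂ] ℂ} {ψ : B →ₗ[ℂ] ℂ} (hφ : PosFun φ) (hψ : PosFun ψ) :
    PosFun (tf φ ψ) := by
  intro x
  obtain ⟨n, a, b, rfl⟩ := TensorProduct.exists_sum_tmul_eq x
  have h := ((hφ.gram a).hadamard (hψ.gram b)).dotProduct_mulVec_nonneg 1
  have e : star (1 : Fin n → ℂ) ⬝ᵥ (Matrix.hadamard (Matrix.of fun k l => φ (star (a k) * a l))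
      (Matrix.of fun k l => ψ (star (b k) * b l))).mulVec 1 =
      _root_.tf φ ψ (star (∑ k, a k ⊗ₜ[ℂ] b k) * ∑ k, a k ⊗ₜ[ℂ] b k) := by
    simp only [dotProduct, Matrix.mulVec, Matrix.of_apply, Matrix.hadamard_apply, star_sum,
      Finset.sum_mul, Finset.mul_sum, map_sum, TensorProduct.star_tmul,
      Algebra.TensorProduct.tmul_mul_tmul, tf_tmul, Pi.star_apply, Pi.one_apply, star_one, one_mul,
      mul_one]
    rw [Finset.sum_comm]
  rw [e, Complex.nonneg_iff] at h
  exact ⟨h.1, h.2.symm⟩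

theorem IsState.tf {φ : A →ₗ[ℂ] ℂ} {ψ : B →ₗ[ℂ] ℂ} (hφ : IsState φ) (hψ : IsState ψ) :
    IsState (tf φ ψ) := by
  refine ⟨hφ.1.tf hψ.1, ?_⟩
  rw [Algebra.TensorProduct.one_def, tf_tmul, hφ.2, hψ.2, one_mul]

/-- Product states separate the points of the algebraic tensor product. -/
theorem eq_zero_of_tf {z : A ⊗[ℂ] B}
    (hz : ∀ (φ : A →ₗ[ℂ] ℂ) (ψ : B →ₗ[ℂ] ℂ), IsState φ → IsState ψ → tf φ ψ z = 0) : z = 0 := by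
  let b := Module.Basis.ofVectorSpace ℂ B
  have sep : ∀ {C : Type} [CStarAlgebra C] (c : C),
      (∀ φ : C →ₗ[ℂ] ℂ, IsState φ → φ c = 0) → c = 0 := by
    intro C _ c hc
    by_contra hne
    obtain ⟨F, hF, h⟩ := exists_state_ne_zero hne
    exact h (hc F hF)
  have h1 : ∀ φ : A →ₗ[ℂ] ℂ, IsState φ → TensorProduct.lid ℂ B (φ.rTensor B z) = 0 := by
    intro φ hφ
    refine sep _ fun ψ hψ => ?_
    rw [← hz φ ψ hφ hψ]
    clear hz
    induction z using TensorProduct.induction_on with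
    | zero => simp
    | tmul a b => simp
    | add x y hx hy => rw [map_add, map_add, map_add, map_add, hx, hy]
  have h2 : ∀ g : B →ₗ[ℂ] ℂ, TensorProduct.rid ℂ A (g.lTensor A z) = 0 := by
    intro g
    refine sep _ fun φ hφ => ?_
    have h3 := congrArg g (h1 φ hφ)
    rw [map_zero] at h3
    rw [← h3]
    clear hz h1 h3
    induction z using TensorProduct.induction_on with
    | zero => simp
    | tmul a b => simp [mul_comm]
    | add x y hx hy => rw [map_add, map_add, map_add, map_add, map_add, map_add, hx, hy]
  classical
  have coord : ∀ (w : A ⊗[ℂ] B) i, TensorProduct.equivFinsuppOfBasisRight (M := A) b w i =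
      TensorProduct.rid ℂ A ((b.coord i).lTensor A w) := by
    intro w i
    induction w using TensorProduct.induction_on with
    | zero => simp
    | tmul a c => simp
    | add x y hx hy => rw [map_add, map_add, map_add, Finsupp.add_apply, hx, hy]
  apply (TensorProduct.equivFinsuppOfBasisRight (M := A) b).injective
  rw [map_zero]
  ext i
  rw [coord, Finsupp.zero_apply]
  exact h2 (b.coord i)

/-- Left multiplication by a fixed element is bounded for the seminorm of `φ ⊗ ψ`, with a
bound independent of the positive functionals. -/
theorem exists_mul_bound (x : A ⊗[ℂ] B) : ∃ C : ℝ, 0 ≤ C ∧ ∀ (φ : A →ₗ[ℂ] ℂ) (ψ : B →ₗ[ℂ] ℂ),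
    PosFun φ → PosFun ψ → ∀ y, pF (tf φ ψ) (x * y) ≤ C * pF (tf φ ψ) y := by
  have aux : ∀ {R : Type} [Ring R] [StarRing R] [Algebra ℂ R] [StarModule ℂ R]
      (F : R →ₗ[ℂ] ℂ), PosFun F → ∀ (r : ℝ) (u c : R), 0 ≤ r →
      ((r ^ 2 : ℝ) : ℂ) • (1 : R) - star u * u = star c * c → ∀ y, pF F (u * y) ≤ r * pF F y := by
    intro R _ _ _ _ F hF r u c hr huc y
    refine le_of_sq_le_sq_of_nonneg ?_ (mul_nonneg hr (pF_nonneg _ _))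
    rw [mul_pow, hF.pF_sq, hF.pF_sq]
    have h := (hF (c * y)).1
    have e : star (c * y) * (c * y) =
        ((r ^ 2 : ℝ) : ℂ) • (star y * y) - star (u * y) * (u * y) := by
      rw [star_mul, star_mul, mul_assoc, ← mul_assoc (star c), ← huc, sub_mul, mul_sub,
        smul_mul_assoc, one_mul, mul_smul_comm]
      simp only [mul_assoc]
    rw [e, map_sub, map_smul, smul_eq_mul, Complex.sub_re, Complex.re_ofReal_mul] at h
    linarith
  induction x using TensorProduct.induction_on with
  | zero => exact ⟨0, le_rfl, fun φ ψ hφ hψ y => by simp [pF]⟩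
  | tmul a b =>
    refine ⟨‖a‖ * ‖b‖, by positivity, fun φ ψ hφ hψ y => ?_⟩
    have hF := hφ.tf hψ
    obtain ⟨c, hc⟩ := exists_norm_sq_sub a
    obtain ⟨d, hd⟩ := exists_norm_sq_sub b
    have h1 := aux _ hF ‖a‖ (a ⊗ₜ[ℂ] (1 : B)) (c ⊗ₜ[ℂ] (1 : B)) (norm_nonneg _) (by
      rw [TensorProduct.star_tmul, TensorProduct.star_tmul, Algebra.TensorProduct.tmul_mul_tmul,
        Algebra.TensorProduct.tmul_mul_tmul, ← hc, TensorProduct.sub_tmul,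
        Algebra.TensorProduct.one_def, star_one, mul_one, TensorProduct.smul_tmul'])
    have h2 := aux _ hF ‖b‖ ((1 : A) ⊗ₜ[ℂ] b) ((1 : A) ⊗ₜ[ℂ] d) (norm_nonneg _) (by
      rw [TensorProduct.star_tmul, TensorProduct.star_tmul, Algebra.TensorProduct.tmul_mul_tmul,
        Algebra.TensorProduct.tmul_mul_tmul, ← hd, TensorProduct.tmul_sub,
        Algebra.TensorProduct.one_def, star_one, mul_one, TensorProduct.tmul_smul])
    have e : a ⊗ₜ[ℂ] b * y = a ⊗ₜ[ℂ] (1 : B) * ((1 : A) ⊗ₜ[ℂ] b * y) := by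
      rw [← mul_assoc, Algebra.TensorProduct.tmul_mul_tmul, mul_one, one_mul]
    rw [e, mul_assoc]
    exact (h1 _).trans (mul_le_mul_of_nonneg_left (h2 _) (norm_nonneg _))
  | add x x' hx hx' =>
    obtain ⟨C, hC, h⟩ := hx
    obtain ⟨C', hC', h'⟩ := hx'
    refine ⟨C + C', by positivity, fun φ ψ hφ hψ y => ?_⟩
    rw [add_mul, add_mul]
    exact ((hφ.tf hψ).pF_add _ _).trans (add_le_add (h φ ψ hφ hψ y) (h' φ ψ hφ hψ y))

end ProductFunctionals

/-! ### The spatial norm -/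

section SpatialNorm

variable {A B : Type} [CStarAlgebra A] [CStarAlgebra B]

/-- `c` bounds left multiplication by `x` in the GNS representations of all product states. -/
def SpatialBound (x : A ⊗[ℂ] B) (c : ℝ) : Prop :=
  0 ≤ c ∧ ∀ (φ : A →ₗ[ℂ] ℂ) (ψ : B →ₗ[ℂ] ℂ), IsState φ → IsState ψ →
    ∀ y, pF (tf φ ψ) (x * y) ≤ c * pF (tf φ ψ) y

/-- The spatial tensor norm: the supremum over all product states of the operator norm of `x`
in the associated GNS representation. -/
def spatialNorm (x : A ⊗[ℂ] B) : ℝ := sInf {c | SpatialBound x c}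

theorem spatialNorm_nonneg (x : A ⊗[ℂ] B) : 0 ≤ spatialNorm x :=
  Real.sInf_nonneg fun _ h => h.1

theorem SpatialBound.le {x : A ⊗[ℂ] B} {c : ℝ} (h : SpatialBound x c) : spatialNorm x ≤ c :=
  csInf_le ⟨0, fun _ h => h.1⟩ h

theorem spatialBound_spatialNorm (x : A ⊗[ℂ] B) : SpatialBound x (spatialNorm x) := by
  refine ⟨spatialNorm_nonneg x, fun φ ψ hφ hψ y => ?_⟩
  have hne : {c | SpatialBound x c}.Nonempty := by
    obtain ⟨C, hC, h⟩ := exists_mul_bound x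
    exact ⟨C, hC, fun φ ψ hφ hψ y => h φ ψ hφ.1 hψ.1 y⟩
  rcases (pF_nonneg (tf φ ψ) y).eq_or_lt with h0 | h0
  · obtain ⟨c, hc⟩ := hne
    have := hc.2 φ ψ hφ hψ y
    rw [← h0, mul_zero] at this ⊢
    exact this
  · rw [← div_le_iff₀ h0]
    exact le_csInf hne fun c hc => (div_le_iff₀ h0).2 (hc.2 φ ψ hφ hψ y)

theorem spatialNorm_mul_le (x y : A ⊗[ℂ] B) :
    spatialNorm (x * y) ≤ spatialNorm x * spatialNorm y := by
  refine SpatialBound.le ⟨mul_nonneg (spatialNorm_nonneg _) (spatialNorm_nonneg _),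
    fun φ ψ hφ hψ z => ?_⟩
  rw [mul_assoc, mul_assoc]
  exact ((spatialBound_spatialNorm x).2 φ ψ hφ hψ _).trans
    (mul_le_mul_of_nonneg_left ((spatialBound_spatialNorm y).2 φ ψ hφ hψ z) (spatialNorm_nonneg _))

theorem spatialNorm_sq_le (x : A ⊗[ℂ] B) : spatialNorm x ^ 2 ≤ spatialNorm (star x * x) := by
  have h : SpatialBound x (√(spatialNorm (star x * x))) := by
    refine ⟨Real.sqrt_nonneg _, fun φ ψ hφ hψ y => ?_⟩
    have hF := hφ.1.tf hψ.1
    refine le_of_sq_le_sq_of_nonneg ?_ (mul_nonneg (Real.sqrt_nonneg _) (pF_nonneg _ _))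
    rw [mul_pow, Real.sq_sqrt (spatialNorm_nonneg _), hF.pF_sq]
    have e : star (x * y) * (x * y) = star y * (star x * x * y) := by
      rw [star_mul]
      simp only [mul_assoc]
    rw [e]
    calc _ ≤ ‖tf φ ψ (star y * (star x * x * y))‖ := Complex.re_le_norm _
      _ ≤ pF (tf φ ψ) y * pF (tf φ ψ) (star x * x * y) := hF.cauchy _ _
      _ ≤ pF (tf φ ψ) y * (spatialNorm (star x * x) * pF (tf φ ψ) y) :=
        mul_le_mul_of_nonneg_left ((spatialBound_spatialNorm _).2 φ ψ hφ hψ y) (pF_nonneg _ _)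
      _ = _ := by ring
  calc spatialNorm x ^ 2 ≤ √(spatialNorm (star x * x)) ^ 2 :=
        pow_le_pow_left₀ (spatialNorm_nonneg _) h.le 2
    _ = _ := Real.sq_sqrt (spatialNorm_nonneg _)

theorem spatialNorm_le_star (x : A ⊗[ℂ] B) : spatialNorm x ≤ spatialNorm (star x) := by
  rcases (spatialNorm_nonneg x).eq_or_lt with h | h
  · rw [← h]
    exact spatialNorm_nonneg _
  · have := (spatialNorm_sq_le x).trans (spatialNorm_mul_le _ _)
    rw [sq] at this
    exact le_of_mul_le_mul_right this h

theorem spatialNorm_smul_le (c : ℂ) (x : A ⊗[ℂ] B) :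
    spatialNorm (c • x) ≤ ‖c‖ * spatialNorm x := by
  refine SpatialBound.le ⟨mul_nonneg (norm_nonneg _) (spatialNorm_nonneg _),
    fun φ ψ hφ hψ y => ?_⟩
  rw [smul_mul_assoc, (hφ.1.tf hψ.1).pF_smul, mul_assoc]
  exact mul_le_mul_of_nonneg_left ((spatialBound_spatialNorm x).2 φ ψ hφ hψ y) (norm_nonneg _)

/-- Product states are contractive for the spatial norm. -/
theorem norm_tf_le_spatialNorm {φ : A →ₗ[ℂ] ℂ} {ψ : B →ₗ[ℂ] ℂ} (hφ : IsState φ) (hψ : IsState ψ)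
    (x : A ⊗[ℂ] B) : ‖tf φ ψ x‖ ≤ spatialNorm x := by
  have h1 : pF (tf φ ψ) 1 = 1 := by simp [pF, (hφ.tf hψ).2]
  have h := (spatialBound_spatialNorm x).2 φ ψ hφ hψ 1
  have h' := (hφ.1.tf hψ.1).cauchy_one x
  rw [h1] at h h'
  rw [mul_one, mul_one] at h
  rw [one_mul] at h'
  exact h'.trans h

theorem isCStarNorm_spatialNorm : IsCStarNorm (spatialNorm (A := A) (B := B)) where
  eq_zero_iff x := by
    refine ⟨fun h => eq_zero_of_tf fun φ ψ hφ hψ => ?_, ?_⟩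
    · rw [← norm_le_zero_iff, ← h]
      exact norm_tf_le_spatialNorm hφ hψ x
    · rintro rfl
      refine le_antisymm (SpatialBound.le ⟨le_rfl, fun φ ψ _ _ y => ?_⟩) (spatialNorm_nonneg _)
      simp [pF]
  nonneg := spatialNorm_nonneg
  add_le x y := by
    refine SpatialBound.le ⟨add_nonneg (spatialNorm_nonneg _) (spatialNorm_nonneg _),
      fun φ ψ hφ hψ z => ?_⟩
    rw [add_mul, add_mul]
    exact ((hφ.1.tf hψ.1).pF_add _ _).trans
      (add_le_add ((spatialBound_spatialNorm x).2 φ ψ hφ hψ z)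
        ((spatialBound_spatialNorm y).2 φ ψ hφ hψ z))
  smul_eq c x := by
    refine le_antisymm (spatialNorm_smul_le c x) ?_
    rcases eq_or_ne c 0 with rfl | hc
    · simpa using spatialNorm_nonneg _
    · have h := spatialNorm_smul_le c⁻¹ (c • x)
      rw [smul_smul, inv_mul_cancel₀ hc, one_smul, norm_inv] at h
      have hc' : 0 < ‖c‖ := norm_pos_iff.2 hc
      rwa [inv_mul_eq_div, le_div_iff₀ hc', mul_comm] at h
  mul_le := spatialNorm_mul_le
  star_eq x := by
    rw [tensorStar_eq]
    refine le_antisymm ?_ (spatialNorm_le_star x)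
    simpa using spatialNorm_le_star (star x)
  cstar x := by
    rw [tensorStar_eq]
    refine le_antisymm ?_ (spatialNorm_sq_le x)
    rw [sq]
    refine (spatialNorm_mul_le _ _).trans
      (mul_le_mul_of_nonneg_right ?_ (spatialNorm_nonneg _))
    simpa using spatialNorm_le_star (star x)

end SpatialNorm

/-! ### Contractivity of *-homomorphisms -/

section Contractive

/-- A homomorphism from a C*-algebra into a normed algebra (not necessarily complete) does not
increase the norm of `h` if it turns the powers `h ^ 2 ^ k` into elements of norm
`‖f h‖ ^ 2 ^ k`: in the completion of the target the norm of `f h` is then its spectral radius,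
and spectra shrink under homomorphisms. -/
theorem norm_hom_le_of_pow {A R : Type} [CStarAlgebra A] [Nontrivial A] [NormedRing R]
    [NormedAlgebra ℂ R] (f : A →ₐ[ℂ] R) (h : A)
    (hpow : ∀ k : ℕ, ‖f h ^ 2 ^ k‖ = ‖f h‖ ^ 2 ^ k) : ‖f h‖ ≤ ‖h‖ := by
  let E := UniformSpace.Completion R
  let _ : NormedAlgebra ℂ E :=
    { (inferInstance : Algebra ℂ E) with norm_smul_le := norm_smul_le }
  let g : A →ₐ[ℂ] E :=
    { (UniformSpace.Completion.coeRingHom (α := R)).comp (f : A →+* R) with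
      commutes' := fun c => by
        change ((f (algebraMap ℂ A c) : R) : E) = ((algebraMap ℂ R c : R) : E)
        rw [f.commutes] }
  have hgc : ∀ x, g x = ((f x : R) : E) := fun x => rfl
  have hg : ∀ x, ‖g x‖ = ‖f x‖ := fun x => by rw [hgc, UniformSpace.Completion.norm_coe]
  have hlim := spectrum.pow_nnnorm_pow_one_div_tendsto_nhds_spectralRadius (g h)
  have hsub : Tendsto (fun k : ℕ => 2 ^ k) atTop atTop :=
    tendsto_pow_atTop_atTop_of_one_lt (by norm_num)
  have hlim' := hlim.comp hsub
  have hconst : (fun n : ℕ => ((‖g h ^ n‖₊ : ENNReal) ^ (1 / n : ℝ))) ∘ (fun k : ℕ => 2 ^ k) =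
      fun _ => (‖g h‖₊ : ENNReal) := by
    funext k
    have e : ‖g h ^ 2 ^ k‖₊ = ‖g h‖₊ ^ 2 ^ k := by
      apply NNReal.coe_injective
      rw [NNReal.coe_pow, coe_nnnorm, coe_nnnorm, ← map_pow, hg, hg, map_pow, hpow]
    simp only [comp_apply]
    rw [e, ENNReal.coe_pow, one_div]
    exact ENNReal.pow_rpow_inv_natCast (by positivity) _
  rw [hconst] at hlim'
  have hr : (‖g h‖₊ : ENNReal) = spectralRadius ℂ (g h) :=
    tendsto_nhds_unique tendsto_const_nhds hlim'
  have h1 : spectralRadius ℂ (g h) ≤ spectralRadius ℂ h :=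
    iSup_le_iSup_of_subset (AlgHom.spectrum_apply_subset g h)
  have h2 : spectralRadius ℂ h ≤ ‖h‖₊ := spectrum.spectralRadius_le_nnnorm h
  have h3 := hr.le.trans (h1.trans h2)
  have h4 : ‖g h‖ ≤ ‖h‖ := by exact_mod_cast h3
  rwa [hg] at h4

/-- A unital *-homomorphism from a C*-algebra into an algebra with a C*-norm is contractive. -/
theorem starHom_contractive {A R : Type} [CStarAlgebra A] [Ring R] [StarRing R] [Algebra ℂ R]
    (ν : R → ℝ) (h0 : ν 0 = 0) (hz : ∀ x, ν x = 0 → x = 0) (hadd : ∀ x y, ν (x + y) ≤ ν x + ν y)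
    (hmul : ∀ x y, ν (x * y) ≤ ν x * ν y) (hsmul : ∀ (c : ℂ) x, ν (c • x) = ‖c‖ * ν x)
    (hC : ∀ x, ν (star x * x) = ν x ^ 2) (f : A →⋆ₐ[ℂ] R) (a : A) : ν (f a) ≤ ‖a‖ := by
  rcases subsingleton_or_nontrivial A with hA | hA
  · rw [Subsingleton.elim a 0, map_zero, h0]
    exact norm_nonneg _
  have hneg : ∀ x, ν (-x) = ν x := fun x => by
    have := hsmul (-1) x
    simpa using this
  let N : RingNorm R :=
    { toFun := ν, map_zero' := h0, add_le' := hadd, neg' := hneg, mul_le' := hmul,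
      eq_zero_of_map_eq_zero' := hz }
  -- iterating the C*-identity computes the norms of the powers `h ^ 2 ^ k`
  have hpow : ∀ h : A, IsSelfAdjoint h → ∀ k : ℕ, ν (f h ^ 2 ^ k) = ν (f h) ^ 2 ^ k := by
    intro h hh k
    induction k with
    | zero => simp
    | succ k ih =>
      have hs : IsSelfAdjoint (f h ^ 2 ^ k) := (hh.map f).pow _
      have := hC (f h ^ 2 ^ k)
      rw [hs.star_eq, ← sq, ← pow_mul, ih, ← pow_mul] at this
      rw [pow_succ, this]
  have hsa : ∀ h : A, IsSelfAdjoint h → ν (f h) ≤ ‖h‖ := by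
    intro h hh
    let _ : NormedRing R := N.toNormedRing
    let _ : NormedAlgebra ℂ R := { ‹Algebra ℂ R› with norm_smul_le := fun c x => (hsmul c x).le }
    exact norm_hom_le_of_pow f.toAlgHom h (hpow h hh)
  have h := hsa (star a * a) (IsSelfAdjoint.star_mul_self a)
  rw [map_mul, map_star, hC, CStarRing.norm_star_mul_self, ← sq] at h
  exact le_of_sq_le_sq_of_nonneg h (norm_nonneg a)

end Contractive

/-! ### Excision of states -/

section Excision

variable {A : Type} [CStarAlgebra A]

/-- Spectral cutoffs near the top `M` of the spectrum of a selfadjoint `h`: a contraction `e`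
supported where `h ≥ M - 2η`, acting as a unit on a nonzero element `e'`. -/
theorem exists_cutoff [Nontrivial A] {h : A} (hh : IsSelfAdjoint h) {η : ℝ} (hη : 0 < η) :
    ∃ (M : ℝ) (e e' : A), (∀ θ : A →ₗ[ℂ] ℂ, IsState θ → (θ h).re ≤ M) ∧ IsSelfAdjoint e ∧
      ‖e‖ ≤ 1 ∧ e * e' = e' ∧ e' ≠ 0 ∧
      ∃ d : A, e * (h * e) - ((M - 2 * η : ℝ) : ℂ) • (e * e) = star d * d := by
  obtain ⟨M, hM, hMax⟩ := (ContinuousFunctionalCalculus.isCompact_spectrum (R := ℝ) h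
    ).exists_isGreatest (ContinuousFunctionalCalculus.spectrum_nonempty h hh)
  let g : ℝ → ℝ := fun t => max 0 (min 1 ((t - (M - 2 * η)) / η))
  let g' : ℝ → ℝ := fun t => max 0 (t - (M - η))
  let k : ℝ → ℝ := fun t => g t * √(t - (M - 2 * η))
  have hg : Continuous g := by fun_prop
  have hg' : Continuous g' := by fun_prop
  have hk : Continuous k := by fun_prop
  have hs : ∀ c : ℝ, cfc (fun t : ℝ => t - c) h = h - (c : ℂ) • (1 : A) := by
    intro c
    rw [cfc_sub (fun t : ℝ => t) (fun _ => c) h, cfc_id' ℝ h, cfc_const c h,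
      Algebra.algebraMap_eq_smul_one, Complex.coe_smul]
  refine ⟨M, cfc g h, cfc g' h, ?_, IsSelfAdjoint.cfc, ?_, ?_, ?_, cfc k h, ?_⟩
  · intro θ hθ
    have e1 : cfc (fun t : ℝ => √(M - t)) h * cfc (fun t : ℝ => √(M - t)) h =
        (M : ℂ) • (1 : A) - h := by
      rw [← cfc_mul _ _ h]
      have : Set.EqOn (fun t : ℝ => √(M - t) * √(M - t)) (fun t => -(t - M)) (spectrum ℝ h) := by
        intro t ht
        have := hMax ht
        simp only
        rw [Real.mul_self_sqrt (by linarith)]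
        ring
      rw [cfc_congr this, cfc_neg (fun t : ℝ => t - M) h, hs, neg_sub]
    have h1 := (hθ.1 (cfc (fun t : ℝ => √(M - t)) h)).1
    rw [(IsSelfAdjoint.cfc (f := fun t : ℝ => √(M - t)) (a := h)).star_eq, e1, map_sub, map_smul,
      hθ.2] at h1
    simp at h1
    exact h1
  · refine norm_cfc_le zero_le_one fun t _ => ?_
    rw [Real.norm_of_nonneg (le_max_left _ _)]
    exact max_le zero_le_one (min_le_left _ _)
  · rw [← cfc_mul _ _ h]
    refine cfc_congr fun t _ => ?_
    rcases le_total (t - (M - η)) 0 with h1 | h1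
    · simp [g', max_eq_left h1]
    · have : g t = 1 := by
        have : 1 ≤ (t - (M - 2 * η)) / η := by
          rw [le_div_iff₀ hη]
          linarith
        simp [g, min_eq_left this]
      simp [this]
  · intro h0
    have h1 := cfc_map_spectrum g' h
    rw [h0] at h1
    have h2 : g' M ∈ spectrum ℝ (0 : A) := by
      rw [h1]
      exact ⟨M, hM, rfl⟩
    rw [spectrum.zero_eq, Set.mem_singleton_iff] at h2
    have h3 : g' M = η := by
      simp only [g']
      rw [max_eq_right] <;> linarith
    linarith
  · rw [(IsSelfAdjoint.cfc (f := k) (a := h)).star_eq, ← cfc_mul k k h]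
    have e1 : (fun t => k t * k t) = fun t => g t * ((t - (M - 2 * η)) * g t) := by
      funext t
      simp only [k]
      rcases le_total 0 (t - (M - 2 * η)) with h1 | h1
      · rw [mul_mul_mul_comm, Real.mul_self_sqrt h1]
        ring
      · have : g t = 0 := by
          have : (t - (M - 2 * η)) / η ≤ 0 := div_nonpos_of_nonpos_of_nonneg h1 hη.le
          simp only [g]
          exact max_eq_left ((min_le_right _ _).trans this)
        simp [this]
    rw [e1, cfc_mul g (fun t => (t - (M - 2 * η)) * g t) h,
      cfc_mul (fun t : ℝ => t - (M - 2 * η)) g h, hs, sub_mul, mul_sub, smul_mul_assoc, one_mul,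
      mul_smul_comm]

/-- Excision for selfadjoint elements. Let `φ` almost maximize the convex functional
`G θ = Re θ(y) + ε ∑ θ(a k)²` over all states, and let `h` be the element representing the
derivative of `G` at `φ`. The quadratic term forces every state that nearly maximizes `h` to agree
with `φ` on the `a k` up to `δ`, and compressing any state `θ` with `θ(e²) ≠ 0` by a spectral cutoff `e` of `h` near the
top of its spectrum produces such a state. As `ε` is small, maximizing `G` costs at most `δ` in the
value at `y`. -/
theorem selfAdjoint_excision {ι : Type} [Fintype ι] (a : ι → A) (ha : ∀ k, IsSelfAdjoint (a k))
    {φ₁ : A →ₗ[ℂ] ℂ} (hφ₁ : IsState φ₁) {y : A} (hy : IsSelfAdjoint y) {δ : ℝ} (hδ : 0 < δ) :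
    ∃ φ : A →ₗ[ℂ] ℂ, IsState φ ∧ (φ₁ y).re - δ ≤ (φ y).re ∧ ∃ e e' : A, IsSelfAdjoint e ∧
      ‖e‖ ≤ 1 ∧ e * e' = e' ∧ e' ≠ 0 ∧ ∀ k, ‖e * (a k * e) - φ (a k) • (e * e)‖ ≤ δ := by
  have hnt : Nontrivial A := by
    refine ⟨1, 0, fun h => ?_⟩
    have := hφ₁.2
    rw [h, map_zero] at this
    exact zero_ne_one this
  set S := ∑ k, ‖a k‖ ^ 2 with hS
  have hS0 : 0 ≤ S := Finset.sum_nonneg fun k _ => sq_nonneg _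
  set ε := δ / (2 * (S + 1)) with hε
  have hε0 : 0 < ε := by positivity
  have hεS : ε * S ≤ δ / 2 := by
    rw [hε, div_mul_eq_mul_div, div_le_div_iff₀ (by positivity) (by norm_num)]
    nlinarith
  set η := min (δ / 2) (ε * δ ^ 2 / 3) with hη
  have hη0 : 0 < η := lt_min (by positivity) (by positivity)
  have hη1 : η ≤ δ / 2 := min_le_left _ _
  have hη2 : 3 * η ≤ ε * δ ^ 2 := by
    have : η ≤ ε * δ ^ 2 / 3 := min_le_right _ _
    linarith
  let G : (A →ₗ[ℂ] ℂ) → ℝ := fun θ => (θ y).re + ε * ∑ k, (θ (a k)).re ^ 2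
  have hsum : ∀ θ : A →ₗ[ℂ] ℂ, IsState θ → ε * ∑ k, (θ (a k)).re ^ 2 ≤ δ / 2 := by
    intro θ hθ
    refine le_trans (mul_le_mul_of_nonneg_left (Finset.sum_le_sum fun k _ => ?_) hε0.le) hεS
    rw [← sq_abs]
    exact pow_le_pow_left₀ (abs_nonneg _)
      ((Complex.abs_re_le_norm _).trans (hθ.norm_le (a k))) 2
  -- a state that almost maximizes the convex functional `G`
  obtain ⟨φ, hφ, hmax⟩ : ∃ φ, IsState φ ∧ ∀ θ, IsState θ → G θ ≤ G φ + η := by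
    have hne : (G '' {θ | IsState θ}).Nonempty := ⟨_, φ₁, hφ₁, rfl⟩
    have hbdd : BddAbove (G '' {θ | IsState θ}) := by
      refine ⟨‖y‖ + δ / 2, ?_⟩
      rintro _ ⟨θ, hθ, rfl⟩
      exact add_le_add ((Complex.re_le_norm _).trans (hθ.norm_le y)) (hsum θ hθ)
    obtain ⟨_, ⟨φ, hφ, rfl⟩, h⟩ := exists_lt_of_lt_csSup hne (sub_lt_self _ hη0)
    refine ⟨φ, hφ, fun θ hθ => ?_⟩
    have := le_csSup hbdd ⟨θ, hθ, rfl⟩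
    linarith
  refine ⟨φ, hφ, ?_, ?_⟩
  · have h1 := hmax φ₁ hφ₁
    have h2 := hsum φ hφ
    have h3 : 0 ≤ ε * ∑ k, (φ₁ (a k)).re ^ 2 :=
      mul_nonneg hε0.le (Finset.sum_nonneg fun k _ => sq_nonneg _)
    simp only [G] at h1
    linarith
  -- the derivative of `G` at `φ`
  set h : A := y + ∑ k, ((2 * ε * (φ (a k)).re : ℝ) : ℂ) • a k with hh
  have hhs : IsSelfAdjoint h := by
    refine hy.add (isSelfAdjoint_sum _ fun k _ => ?_)
    rw [IsSelfAdjoint, star_smul, (ha k).star_eq, RCLike.star_def, Complex.conj_ofReal]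
  have hθh : ∀ θ : A →ₗ[ℂ] ℂ, (θ h).re = (θ y).re + ∑ k, 2 * ε * (φ (a k)).re * (θ (a k)).re := by
    intro θ
    simp only [hh, map_add, map_sum, map_smul, smul_eq_mul, Complex.add_re, Complex.re_sum,
      Complex.re_ofReal_mul]
  obtain ⟨M, e, e', hM, he, hen, hee', he', d, hd⟩ := exists_cutoff hhs hη0
  -- `G θ` exceeds its linearization at `φ` by `ε` times the squared distance from `φ` on the `a k`
  have hdev : ∀ θ : A →ₗ[ℂ] ℂ, IsState θ → M - 2 * η ≤ (θ h).re →
      ∀ k, |(θ (a k)).re - (φ (a k)).re| ≤ δ := by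
    intro θ hθ hθM k
    have h1 : ε * ∑ k, ((θ (a k)).re - (φ (a k)).re) ^ 2 =
        G θ - (θ h).re + ((φ h).re - G φ) := by
      simp only [G, hθh, Finset.mul_sum]
      rw [add_sub_add_left_eq_sub, add_sub_add_left_eq_sub, ← Finset.sum_sub_distrib,
        ← Finset.sum_sub_distrib, ← Finset.sum_add_distrib]
      exact Finset.sum_congr rfl fun k _ => by ring
    have h2 := hmax θ hθ
    have h3 := hM φ hφ
    have h4 : ((θ (a k)).re - (φ (a k)).re) ^ 2 ≤ ∑ k, ((θ (a k)).re - (φ (a k)).re) ^ 2 :=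
      Finset.single_le_sum (f := fun k => ((θ (a k)).re - (φ (a k)).re) ^ 2)
        (fun k _ => sq_nonneg _) (Finset.mem_univ k)
    have h5 : ((θ (a k)).re - (φ (a k)).re) ^ 2 ≤ δ ^ 2 := by
      have := mul_le_mul_of_nonneg_left h4 hε0.le
      refine le_of_mul_le_mul_left (this.trans ?_) hε0
      linarith
    exact abs_le_of_sq_le_sq h5 hδ.le
  refine ⟨e, e', he, hen, hee', he', fun k => ?_⟩
  have hφa : φ (a k) = ((φ (a k)).re : ℂ) :=
    Complex.ext (by simp) (by simp [hφ.1.im_eq_zero (ha k)])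
  have hsa : IsSelfAdjoint (e * (a k * e) - φ (a k) • (e * e)) := by
    rw [hφa]
    simp only [IsSelfAdjoint, star_sub, star_mul, star_smul, he.star_eq, (ha k).star_eq,
      RCLike.star_def, Complex.conj_ofReal, mul_assoc]
  obtain ⟨θ, hθ, hθn⟩ := exists_state_norm hsa
  rw [← hθn]
  -- compare `φ` with the normalized compression of `θ` by `e`
  set w := (θ (e * e)).re with hw
  have hwC : θ (e * e) = (w : ℂ) := by
    refine Complex.ext (by simp [hw]) ?_
    have := (hθ.1 e).2
    rw [he.star_eq] at this
    simp [this]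
  have hw0 : 0 ≤ w := by
    have := (hθ.1 e).1
    rwa [he.star_eq] at this
  have hw1 : w ≤ 1 := by
    refine (Complex.re_le_norm _).trans ((hθ.norm_le _).trans ((norm_mul_le _ _).trans ?_))
    exact mul_le_one₀ hen (norm_nonneg _) hen
  rw [map_sub, map_smul, smul_eq_mul, hwC]
  rcases hw0.eq_or_lt with h0 | h0
  · have h1 : pF θ e = 0 := by
      rw [pF, he.star_eq, ← hw, ← h0, Real.sqrt_zero]
    have h2 := hθ.1.cauchy e (a k * e)
    rw [h1, zero_mul, he.star_eq] at h2
    rw [norm_le_zero_iff.1 h2, ← h0]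
    simpa using hδ.le
  · have hwne : (w : ℂ) ≠ 0 := by exact_mod_cast h0.ne'
    let θ' : A →ₗ[ℂ] ℂ := ((w⁻¹ : ℝ) : ℂ) • conjFun θ e
    have hθ'a : ∀ z, θ' z = ((w⁻¹ : ℝ) : ℂ) * θ (e * (z * e)) := fun z => by
      simp [θ', he.star_eq]
    have hθ' : IsState θ' := by
      refine ⟨fun x => ?_, ?_⟩
      · have := hθ.1.conjFun e x
        simp only [θ', LinearMap.smul_apply, smul_eq_mul, Complex.re_ofReal_mul,
          Complex.im_ofReal_mul, this.2, mul_zero, and_true]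
        exact mul_nonneg (by positivity) this.1
      · rw [hθ'a, one_mul, hwC]
        push_cast
        exact inv_mul_cancel₀ hwne
    have h1 : M - 2 * η ≤ (θ' h).re := by
      have := (hθ.1 d).1
      rw [← hd, map_sub, map_smul, smul_eq_mul, hwC, Complex.sub_re, Complex.re_ofReal_mul,
        Complex.ofReal_re] at this
      rw [hθ'a, Complex.re_ofReal_mul, ← div_eq_inv_mul, le_div_iff₀ h0]
      linarith
    have h2 := hdev θ' hθ' h1 k
    have h3 : θ' (a k) = ((θ' (a k)).re : ℂ) :=
      Complex.ext (by simp) (by simp [hθ'.1.im_eq_zero (ha k)])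
    have h4 : θ (e * (a k * e)) = w * θ' (a k) := by
      rw [hθ'a]
      rw [← mul_assoc (w : ℂ), Complex.ofReal_inv, mul_inv_cancel₀ hwne, one_mul]
    rw [h4, h3, hφa, mul_comm _ (w : ℂ), ← mul_sub, ← Complex.ofReal_sub, ← Complex.ofReal_mul,
      Complex.norm_real, Real.norm_eq_abs, abs_mul, abs_of_pos h0]
    calc w * _ ≤ 1 * δ := mul_le_mul hw1 h2 (abs_nonneg _) zero_le_one
      _ = δ := one_mul δ

/-- Excision: up to `δ`, any state can be replaced on the selfadjoint element `y` by a state `φ`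
not decreasing the value at `y` and such that compression by a suitable norm-one selfadjoint `e`
sends each `a k` to `φ (a k) • e ^ 2`. -/
theorem excision {ι : Type} [Fintype ι] (a : ι → A)
    {φ₁ : A →ₗ[ℂ] ℂ} (hφ₁ : IsState φ₁) {y : A} (hy : IsSelfAdjoint y) {δ : ℝ} (hδ : 0 < δ) :
    ∃ φ : A →ₗ[ℂ] ℂ, IsState φ ∧ (φ₁ y).re - δ ≤ (φ y).re ∧ ∃ e e' : A, IsSelfAdjoint e ∧
      ‖e‖ ≤ 1 ∧ e * e' = e' ∧ e' ≠ 0 ∧ ∀ k, ‖e * (a k * e) - φ (a k) • (e * e)‖ ≤ δ := by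
  obtain ⟨φ, hφ, h1, e, e', he, hen, hee', he', h⟩ := selfAdjoint_excision
    (fun k : ι ⊕ ι => k.elim (fun k => (realPart (a k) : A)) (fun k => (imaginaryPart (a k) : A)))
    (by rintro (k | k); exacts [(realPart (a k)).2, (imaginaryPart (a k)).2]) hφ₁ hy
    (half_pos hδ)
  refine ⟨φ, hφ, by linarith, e, e', he, hen, hee', he', fun k => ?_⟩
  have hr := h (Sum.inl k)
  have hi := h (Sum.inr k)
  simp only [Sum.elim_inl, Sum.elim_inr] at hr hi
  set r : A := (realPart (a k) : A)
  set i : A := (imaginaryPart (a k) : A)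
  have e1 : a k = r + Complex.I • i := (realPart_add_I_smul_imaginaryPart (a k)).symm
  have e2 : e * (a k * e) - φ (a k) • (e * e) = (e * (r * e) - φ r • (e * e)) +
      Complex.I • (e * (i * e) - φ i • (e * e)) := by
    rw [e1, map_add, map_smul, add_mul, mul_add, add_smul, smul_mul_assoc, mul_smul_comm, smul_sub,
      smul_smul, smul_eq_mul]
    abel
  rw [e2]
  refine (norm_add_le _ _).trans ?_
  rw [norm_smul, Complex.norm_I, one_mul]
  linarith

end Excision

/-! ### Product states are contractive for every C*-norm -/

section Takesaki

variable {A B : Type} [CStarAlgebra A] [CStarAlgebra B] {ν : A ⊗[ℂ] B → ℝ}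

theorem IsCStarNorm.map_zero (hν : IsCStarNorm ν) : ν 0 = 0 := (hν.eq_zero_iff 0).2 rfl

theorem IsCStarNorm.star_mul_self (hν : IsCStarNorm ν) (x : A ⊗[ℂ] B) :
    ν (star x * x) = ν x ^ 2 := by
  rw [← tensorStar_eq]
  exact hν.cstar x

/-- A *-homomorphism from a C*-algebra is contractive for every C*-norm on the target, although the
target need not be complete for it. -/
theorem IsCStarNorm.starHom_le (hν : IsCStarNorm ν) {C : Type} [CStarAlgebra C]
    (f : C →⋆ₐ[ℂ] A ⊗[ℂ] B) (c : C) : ν (f c) ≤ ‖c‖ :=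
  starHom_contractive ν hν.map_zero (fun x h => (hν.eq_zero_iff x).1 h) hν.add_le hν.mul_le
    hν.smul_eq hν.star_mul_self f c

theorem IsCStarNorm.tmul_le (hν : IsCStarNorm ν) (a : A) (b : B) :
    ν (a ⊗ₜ[ℂ] b) ≤ ‖a‖ * ‖b‖ := by
  let f : A →⋆ₐ[ℂ] A ⊗[ℂ] B :=
    { Algebra.TensorProduct.includeLeft with
      map_star' := fun a => by
        change star a ⊗ₜ[ℂ] (1 : B) = star (a ⊗ₜ[ℂ] (1 : B))
        rw [TensorProduct.star_tmul, star_one] }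
  let g : B →⋆ₐ[ℂ] A ⊗[ℂ] B :=
    { Algebra.TensorProduct.includeRight with
      map_star' := fun b => by
        change (1 : A) ⊗ₜ[ℂ] star b = star ((1 : A) ⊗ₜ[ℂ] b)
        rw [TensorProduct.star_tmul, star_one] }
  have h1 : ν (a ⊗ₜ[ℂ] 1) ≤ ‖a‖ := hν.starHom_le f a
  have h2 : ν (1 ⊗ₜ[ℂ] b) ≤ ‖b‖ := hν.starHom_le g b
  have e : a ⊗ₜ[ℂ] b = a ⊗ₜ[ℂ] (1 : B) * (1 : A) ⊗ₜ[ℂ] b := by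
    rw [Algebra.TensorProduct.tmul_mul_tmul, mul_one, one_mul]
  rw [e]
  exact (hν.mul_le _ _).trans (mul_le_mul h1 h2 (hν.nonneg _) (norm_nonneg _))

theorem IsCStarNorm.sum_le (hν : IsCStarNorm ν) {ι : Type} (s : Finset ι) (x : ι → A ⊗[ℂ] B) :
    ν (∑ k ∈ s, x k) ≤ ∑ k ∈ s, ν (x k) :=
  Finset.le_sum_of_subadditive ν hν.map_zero.le hν.add_le s x

theorem PosFun.re_realPart {F : A →ₗ[ℂ] ℂ} (hF : PosFun F) (a : A) :
    (F (realPart a : A)).re = (F a).re := by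
  conv_rhs => rw [← realPart_add_I_smul_imaginaryPart a]
  rw [map_add, map_smul, smul_eq_mul, Complex.add_re, Complex.I_mul_re,
    hF.im_eq_zero (imaginaryPart a).2, neg_zero, add_zero]

/-- One-sided form of Takesaki's theorem. First `φ₁`, then `ψ₁`, is replaced by an excised state at
the cost of `δ` in the real part of the value at `x`. If `e` and `f` excise `φ` and `ψ`, then
`(e ⊗ f) x (e ⊗ f)` is close to `(φ ⊗ ψ)(x) • (e² ⊗ f²)`, where `ν (e ⊗ f) ≤ 1 ≤ ν (e² ⊗ f²)`. -/
theorem IsCStarNorm.re_tf_le (hν : IsCStarNorm ν) {φ₁ : A →ₗ[ℂ] ℂ} {ψ₁ : B →ₗ[ℂ] ℂ}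
    (hφ₁ : IsState φ₁) (hψ₁ : IsState ψ₁) (x : A ⊗[ℂ] B) : (tf φ₁ ψ₁ x).re ≤ ν x := by
  obtain ⟨n, a, b, rfl⟩ := TensorProduct.exists_sum_tmul_eq x
  set x := ∑ k, a k ⊗ₜ[ℂ] b k with hx
  set K := ∑ k, (‖b k‖ + ‖a k‖) with hK
  have hK0 : 0 ≤ K := Finset.sum_nonneg fun k _ => by positivity
  have main : ∀ δ > 0, (tf φ₁ ψ₁ x).re ≤ ν x + δ * (K + 2) := by
    intro δ hδ
    have hl : ∀ (φ : A →ₗ[ℂ] ℂ) (ψ : B →ₗ[ℂ] ℂ), tf φ ψ x = φ (∑ k, ψ (b k) • a k) := by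
      intro φ ψ
      simp only [hx, map_sum, tf_tmul, map_smul, smul_eq_mul, mul_comm]
    have hr : ∀ (φ : A →ₗ[ℂ] ℂ) (ψ : B →ₗ[ℂ] ℂ), tf φ ψ x = ψ (∑ k, φ (a k) • b k) := by
      intro φ ψ
      simp only [hx, map_sum, tf_tmul, map_smul, smul_eq_mul]
    obtain ⟨φ, hφ, h1, e, e', he, hen, hee', he', ha⟩ :=
      excision a hφ₁ (realPart (∑ k, ψ₁ (b k) • a k)).2 hδ
    rw [hφ₁.1.re_realPart, hφ.1.re_realPart, ← hl, ← hl] at h1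
    obtain ⟨ψ, hψ, h2, f, f', hf, hfn, hff', hf', hb⟩ :=
      excision b hψ₁ (realPart (∑ k, φ (a k) • b k)).2 hδ
    rw [hψ₁.1.re_realPart, hψ.1.re_realPart, ← hr, ← hr] at h2
    set z : A ⊗[ℂ] B := e ⊗ₜ[ℂ] f
    set q : A ⊗[ℂ] B := (e * e) ⊗ₜ[ℂ] (f * f)
    have hz : ν z ≤ 1 :=
      (hν.tmul_le e f).trans (mul_le_one₀ hen (norm_nonneg _) hfn)
    -- `q` acts as a unit on a nonzero elementary tensor
    have hq : 1 ≤ ν q := by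
      have hne : e' ⊗ₜ[ℂ] f' ≠ 0 := by
        obtain ⟨F, -, hF'⟩ := exists_state_ne_zero he'
        obtain ⟨F₂, -, hF₂'⟩ := exists_state_ne_zero hf'
        intro h0
        have := congrArg (tf F F₂) h0
        rw [tf_tmul, _root_.map_zero] at this
        exact (mul_ne_zero hF' hF₂') this
      have hpos : 0 < ν (e' ⊗ₜ[ℂ] f') :=
        lt_of_le_of_ne (hν.nonneg _) fun h => hne ((hν.eq_zero_iff _).1 h.symm)
      have h3 := hν.mul_le q (e' ⊗ₜ[ℂ] f')
      have h4 : q * e' ⊗ₜ[ℂ] f' = e' ⊗ₜ[ℂ] f' := by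
        rw [Algebra.TensorProduct.tmul_mul_tmul, mul_assoc, mul_assoc, hee', hee', hff', hff']
      rw [h4] at h3
      nlinarith
    have hzx : z * (x * z) = ∑ k, (e * (a k * e)) ⊗ₜ[ℂ] (f * (b k * f)) := by
      rw [hx, Finset.sum_mul, Finset.mul_sum]
      refine Finset.sum_congr rfl fun k _ => ?_
      rw [Algebra.TensorProduct.tmul_mul_tmul, Algebra.TensorProduct.tmul_mul_tmul]
    have hdiff : tf φ ψ x • q = z * (x * z) + ∑ k, (-1 : ℂ) •
        ((e * (a k * e) - φ (a k) • (e * e)) ⊗ₜ[ℂ] (f * (b k * f)) +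
          (φ (a k) • (e * e)) ⊗ₜ[ℂ] (f * (b k * f) - ψ (b k) • (f * f))) := by
      rw [hzx, ← Finset.sum_add_distrib, hx, map_sum, Finset.sum_smul]
      refine Finset.sum_congr rfl fun k _ => ?_
      rw [tf_tmul, TensorProduct.sub_tmul, TensorProduct.tmul_sub, TensorProduct.tmul_smul,
        ← TensorProduct.smul_tmul', ← TensorProduct.smul_tmul']
      module
    have hbd : ∀ k, ν ((-1 : ℂ) • ((e * (a k * e) - φ (a k) • (e * e)) ⊗ₜ[ℂ] (f * (b k * f)) +
          (φ (a k) • (e * e)) ⊗ₜ[ℂ] (f * (b k * f) - ψ (b k) • (f * f)))) ≤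
          δ * (‖b k‖ + ‖a k‖) := by
      intro k
      rw [hν.smul_eq, norm_neg, norm_one, one_mul]
      have h5 : ‖f * (b k * f)‖ ≤ ‖b k‖ := by
        calc ‖f * (b k * f)‖ ≤ ‖f‖ * (‖b k‖ * ‖f‖) :=
              (norm_mul_le _ _).trans (mul_le_mul_of_nonneg_left (norm_mul_le _ _) (norm_nonneg _))
          _ ≤ 1 * (‖b k‖ * 1) := by gcongr
          _ = _ := by ring
      have h6 : ‖φ (a k) • (e * e)‖ ≤ ‖a k‖ := by
        rw [norm_smul]
        calc ‖φ (a k)‖ * ‖e * e‖ ≤ ‖a k‖ * (‖e‖ * ‖e‖) := by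
              gcongr
              · exact hφ.norm_le _
              · exact norm_mul_le _ _
          _ ≤ ‖a k‖ * (1 * 1) := by gcongr
          _ = _ := by ring
      calc _ ≤ _ := hν.add_le _ _
        _ ≤ δ * ‖b k‖ + ‖a k‖ * δ := add_le_add
            ((hν.tmul_le _ _).trans (mul_le_mul (ha k) h5 (norm_nonneg _) hδ.le))
            ((hν.tmul_le _ _).trans (mul_le_mul h6 (hb k) (norm_nonneg _) (norm_nonneg _)))
        _ = _ := by ring
    have h7 : ‖tf φ ψ x‖ ≤ ν x + δ * K := by
      calc ‖tf φ ψ x‖ ≤ ‖tf φ ψ x‖ * ν q := le_mul_of_one_le_right (norm_nonneg _) hq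
        _ = ν (tf φ ψ x • q) := (hν.smul_eq _ _).symm
        _ ≤ ν (z * (x * z)) + ∑ k, δ * (‖b k‖ + ‖a k‖) := by
          rw [hdiff]
          exact (hν.add_le _ _).trans (add_le_add le_rfl
            ((hν.sum_le _ _).trans (Finset.sum_le_sum fun k _ => hbd k)))
        _ ≤ 1 * (ν x * 1) + δ * K := by
          rw [hK, Finset.mul_sum]
          refine add_le_add ((hν.mul_le _ _).trans (mul_le_mul hz ((hν.mul_le _ _).trans
            (mul_le_mul_of_nonneg_left hz (hν.nonneg _))) (hν.nonneg _) zero_le_one)) le_rfl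
        _ = _ := by ring
    have h8 := (Complex.re_le_norm _).trans h7
    linarith
  refine le_of_forall_pos_le_add fun ε hε => ?_
  have := main (ε / (K + 2)) (by positivity)
  rwa [div_mul_cancel₀ _ (by positivity)] at this

/-- Takesaki's theorem for functionals: product states are contractive for every C*-norm. -/
theorem IsCStarNorm.norm_tf_le (hν : IsCStarNorm ν) {φ : A →ₗ[ℂ] ℂ} {ψ : B →ₗ[ℂ] ℂ}
    (hφ : IsState φ) (hψ : IsState ψ) (x : A ⊗[ℂ] B) : ‖tf φ ψ x‖ ≤ ν x := by
  rcases eq_or_ne (tf φ ψ x) 0 with h0 | h0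
  · rw [h0, norm_zero]
    exact hν.nonneg x
  · set c : ℂ := (starRingEnd ℂ) (tf φ ψ x) / (‖tf φ ψ x‖ : ℂ)
    have hn : (‖tf φ ψ x‖ : ℂ) ≠ 0 := by simpa using h0
    have hc : ‖c‖ = 1 := by
      simp only [c, norm_div, RCLike.norm_conj, Complex.norm_real, norm_norm]
      exact div_self (norm_ne_zero_iff.2 h0)
    have h1 := hν.re_tf_le hφ hψ (c • x)
    rw [hν.smul_eq, hc, one_mul, map_smul, smul_eq_mul] at h1
    have h2 : c * tf φ ψ x = (‖tf φ ψ x‖ : ℂ) := by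
      simp only [c]
      rw [div_mul_eq_mul_div, Complex.conj_mul', sq, mul_div_assoc, div_self hn, mul_one]
    rwa [h2, Complex.ofReal_re] at h1

end Takesaki

/-! ### The minimal norm is the spatial norm -/

section MinNorm

variable {A B C D : Type} [CStarAlgebra A] [CStarAlgebra B] [CStarAlgebra C] [CStarAlgebra D]

/-- The tensor product of two unital *-homomorphisms. -/
def tensorHom (f : C →⋆ₐ[ℂ] A) (g : D →⋆ₐ[ℂ] B) : C ⊗[ℂ] D →⋆ₐ[ℂ] A ⊗[ℂ] B :=
  { Algebra.TensorProduct.map f.toAlgHom g.toAlgHom with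
    map_star' := fun x => by
      change TensorProduct.map f.toAlgHom.toLinearMap g.toAlgHom.toLinearMap (star x) =
        star (TensorProduct.map f.toAlgHom.toLinearMap g.toAlgHom.toLinearMap x)
      induction x using TensorProduct.induction_on with
      | zero => simp
      | tmul a b =>
        rw [TensorProduct.star_tmul, TensorProduct.map_tmul, TensorProduct.map_tmul,
          TensorProduct.star_tmul]
        exact congrArg₂ _ (map_star f a) (map_star g b)
      | add x y hx hy => rw [star_add, map_add, map_add, star_add, hx, hy] }

@[simp]
theorem tensorHom_tmul (f : C →⋆ₐ[ℂ] A) (g : D →⋆ₐ[ℂ] B) (c : C) (d : D) :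
    tensorHom f g (c ⊗ₜ d) = f c ⊗ₜ[ℂ] g d := rfl

theorem tensorHom_injective {f : C →⋆ₐ[ℂ] A} {g : D →⋆ₐ[ℂ] B} (hf : Injective f)
    (hg : Injective g) : Injective (tensorHom f g) :=
  TensorProduct.map_injective_of_flat_flat f.toAlgHom.toLinearMap g.toAlgHom.toLinearMap hf hg

/-- The linear functionals bounded by a multiple of `ν`. -/
def boundedFunctionals (ν : C ⊗[ℂ] D → ℝ) :
    Submodule ℂ (C ⊗[ℂ] D →ₗ[ℂ] ℂ) where
  carrier := {F | ∃ K : ℝ, ∀ x, ‖F x‖ ≤ K * ν x}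
  zero_mem' := ⟨0, fun x => by simp⟩
  add_mem' := by
    rintro F G ⟨K, hK⟩ ⟨L, hL⟩
    refine ⟨K + L, fun x => ?_⟩
    rw [add_mul]
    exact (norm_add_le _ _).trans (add_le_add (hK x) (hL x))
  smul_mem' := by
    rintro c F ⟨K, hK⟩
    refine ⟨‖c‖ * K, fun x => ?_⟩
    rw [LinearMap.smul_apply, norm_smul, mul_assoc]
    exact mul_le_mul_of_nonneg_left (hK x) (norm_nonneg c)

/-- A positive functional is a multiple of a state, or zero. -/
theorem PosFun.exists_smul_state {φ : A →ₗ[ℂ] ℂ} (hφ : PosFun φ) :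
    φ = 0 ∨ ∃ (c : ℂ) (θ : A →ₗ[ℂ] ℂ), IsState θ ∧ φ = c • θ := by
  have h1 := hφ 1
  rw [star_one, one_mul] at h1
  have hφ1 : φ 1 = ((φ 1).re : ℂ) := Complex.ext (by simp) (by simp [h1.2])
  rcases h1.1.eq_or_lt with h0 | h0
  · left
    ext x
    have := hφ.cauchy_one x
    rw [pF, star_one, one_mul, ← h0, Real.sqrt_zero, zero_mul] at this
    simpa using this
  · right
    have hne : ((φ 1).re : ℂ) ≠ 0 := by exact_mod_cast h0.ne'
    refine ⟨(φ 1).re, (((φ 1).re⁻¹ : ℝ) : ℂ) • φ, ⟨fun x => ?_, ?_⟩, ?_⟩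
    · simp only [LinearMap.smul_apply, smul_eq_mul, Complex.re_ofReal_mul,
          Complex.im_ofReal_mul, (hφ x).2, mul_zero, and_true]
      exact mul_nonneg (by positivity) (hφ x).1
    · rw [LinearMap.smul_apply, smul_eq_mul, hφ1]
      simp only [Complex.ofReal_re, Complex.ofReal_inv]
      exact inv_mul_cancel₀ hne
    · rw [smul_smul, Complex.ofReal_inv, mul_inv_cancel₀ hne, one_smul]

/-- The span of the positive functionals. -/
def posSpan (A : Type) [CStarAlgebra A] : Submodule ℂ (A →ₗ[ℂ] ℂ) :=
  Submodule.span ℂ {φ | PosFun φ}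

theorem tf_add_left (φ φ' : A →ₗ[ℂ] ℂ) (ψ : B →ₗ[ℂ] ℂ) : tf (φ + φ') ψ = tf φ ψ + tf φ' ψ := by
  ext a b
  simp [add_mul]

theorem tf_smul_left (c : ℂ) (φ : A →ₗ[ℂ] ℂ) (ψ : B →ₗ[ℂ] ℂ) : tf (c • φ) ψ = c • tf φ ψ := by
  ext a b
  simp [mul_assoc]

theorem tf_add_right (φ : A →ₗ[ℂ] ℂ) (ψ ψ' : B →ₗ[ℂ] ℂ) : tf φ (ψ + ψ') = tf φ ψ + tf φ ψ' := by
  ext a b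
  simp [mul_add]

theorem tf_smul_right (c : ℂ) (φ : A →ₗ[ℂ] ℂ) (ψ : B →ₗ[ℂ] ℂ) : tf φ (c • ψ) = c • tf φ ψ := by
  ext a b
  simp [mul_left_comm]

theorem tf_mem_boundedFunctionals {ν : C ⊗[ℂ] D → ℝ} (hν : IsCStarNorm ν) {φ : C →ₗ[ℂ] ℂ}
    {ψ : D →ₗ[ℂ] ℂ} (hφ : φ ∈ posSpan C) (hψ : ψ ∈ posSpan D) :
    tf φ ψ ∈ boundedFunctionals ν := by
  induction hφ using Submodule.span_induction with
  | zero =>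
    have : tf (0 : C →ₗ[ℂ] ℂ) ψ = 0 := by ext a b; simp
    rw [this]
    exact zero_mem _
  | add x y _ _ hx hy => rw [tf_add_left]; exact add_mem hx hy
  | smul c x _ hx => rw [tf_smul_left]; exact Submodule.smul_mem _ c hx
  | mem φ hφ =>
    induction hψ using Submodule.span_induction with
    | zero =>
      have : tf φ (0 : D →ₗ[ℂ] ℂ) = 0 := by ext a b; simp
      rw [this]
      exact zero_mem _
    | add x y _ _ hx hy => rw [tf_add_right]; exact add_mem hx hy
    | smul c x _ hx => rw [tf_smul_right]; exact Submodule.smul_mem _ c hx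
    | mem ψ hψ =>
      rcases PosFun.exists_smul_state hφ with rfl | ⟨c, θ, hθ, rfl⟩
      · have : tf (0 : C →ₗ[ℂ] ℂ) ψ = 0 := by ext a b; simp
        rw [this]
        exact zero_mem _
      rcases PosFun.exists_smul_state hψ with rfl | ⟨d, ρ, hρ, rfl⟩
      · have : tf (c • θ) (0 : D →ₗ[ℂ] ℂ) = 0 := by ext a b; simp
        rw [this]
        exact zero_mem _
      rw [tf_smul_left, tf_smul_right]
      refine Submodule.smul_mem _ _ (Submodule.smul_mem _ _ ⟨1, fun x => ?_⟩)
      rw [one_mul]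
      exact hν.norm_tf_le hθ hρ x

/-- The matrix coefficient `c ↦ φ (u* f(c) v)`. -/
def coeffFun (φ : A →ₗ[ℂ] ℂ) (f : C →⋆ₐ[ℂ] A) (u v : A) : C →ₗ[ℂ] ℂ :=
  φ ∘ₗ LinearMap.mulLeft ℂ (star u) ∘ₗ LinearMap.mulRight ℂ v ∘ₗ f.toAlgHom.toLinearMap

theorem coeffFun_apply (φ : A →ₗ[ℂ] ℂ) (f : C →⋆ₐ[ℂ] A) (u v : A) (c : C) :
    coeffFun φ f u v c = φ (star u * (f c * v)) := rfl

/-- Matrix coefficients of positive functionals are spanned by positive functionals, by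
polarization. -/
theorem coeffFun_mem_posSpan {φ : A →ₗ[ℂ] ℂ} (hφ : PosFun φ) (f : C →⋆ₐ[ℂ] A) (u v : A) :
    coeffFun φ f u v ∈ posSpan C := by
  have hpos : ∀ w : A, coeffFun φ f w w ∈ posSpan C := by
    intro w
    refine Submodule.subset_span fun x => ?_
    have := hφ (f x * w)
    rw [star_mul, ← map_star, mul_assoc, ← mul_assoc (f (star x)), ← map_mul] at this
    exact this
  have e : coeffFun φ f u v = (1 / 4 : ℂ) • (coeffFun φ f (u + v) (u + v)
      - coeffFun φ f (u - v) (u - v)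
      - Complex.I • coeffFun φ f (u + Complex.I • v) (u + Complex.I • v)
      + Complex.I • coeffFun φ f (u - Complex.I • v) (u - Complex.I • v)) := by
    ext c
    simp only [LinearMap.smul_apply, LinearMap.add_apply, LinearMap.sub_apply, coeffFun_apply,
      star_add, star_sub, star_smul, add_mul, sub_mul, mul_add, mul_sub, map_add, map_sub,
      smul_mul_assoc, mul_smul_comm, map_smul, smul_eq_mul, RCLike.star_def, Complex.conj_I]
    ring_nf
    simp only [Complex.I_sq]
    ring
  rw [e]
  exact Submodule.smul_mem _ _ (add_mem (sub_mem (sub_mem (hpos _) (hpos _))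
    (Submodule.smul_mem _ _ (hpos _))) (Submodule.smul_mem _ _ (hpos _)))

/-- The spatial norm, transported along a tensor product of *-homomorphisms, is dominated by
every C*-norm. -/
theorem IsCStarNorm.spatialNorm_tensorHom_le {ν : C ⊗[ℂ] D → ℝ} (hν : IsCStarNorm ν)
    (f : C →⋆ₐ[ℂ] A) (g : D →⋆ₐ[ℂ] B) (x : C ⊗[ℂ] D) :
    spatialNorm (tensorHom f g x) ≤ ν x := by
  refine SpatialBound.le ⟨hν.nonneg x, fun φ ψ hφ hψ y => ?_⟩
  have hP := (hφ.1.tf hψ.1).conjFun y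
  have hF : PosFun (_root_.conjFun (tf φ ψ) y ∘ₗ (tensorHom f g).toAlgHom.toLinearMap) :=
    hP.comp _ fun x => by
      change tensorHom f g _ = star (tensorHom f g _) * tensorHom f g _
      rw [map_mul, map_star]
  set F := _root_.conjFun (tf φ ψ) y ∘ₗ (tensorHom f g).toAlgHom.toLinearMap with hFdef
  have hFx : ∀ z, F z = tf φ ψ (star y * (tensorHom f g z * y)) := fun z => rfl
  have hmem : F ∈ boundedFunctionals ν := by
    obtain ⟨n, a, b, hy⟩ := TensorProduct.exists_sum_tmul_eq y
    have e : F = ∑ i, ∑ j, tf (coeffFun φ f (a i) (a j)) (coeffFun ψ g (b i) (b j)) := by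
      ext c d
      simp only [TensorProduct.AlgebraTensorModule.curry_apply, LinearMap.restrictScalars_self,
        TensorProduct.curry_apply, LinearMap.sum_apply, tf_tmul, coeffFun_apply]
      rw [hFx, hy, star_sum, Finset.sum_mul, map_sum]
      refine Finset.sum_congr rfl fun i _ => ?_
      rw [Finset.mul_sum, Finset.mul_sum, map_sum]
      refine Finset.sum_congr rfl fun j _ => ?_
      rw [tensorHom_tmul, TensorProduct.star_tmul, Algebra.TensorProduct.tmul_mul_tmul,
        Algebra.TensorProduct.tmul_mul_tmul, tf_tmul]
    rw [e]
    exact sum_mem fun i _ => sum_mem fun j _ => tf_mem_boundedFunctionals hν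
      (coeffFun_mem_posSpan hφ.1 f _ _) (coeffFun_mem_posSpan hψ.1 g _ _)
  obtain ⟨K, hK⟩ := hmem
  have h := hF.bound hν.nonneg hν.star_mul_self hK x
  have e1 : ∀ z, pF F z = pF (tf φ ψ) (tensorHom f g z * y) := by
    intro z
    rw [pF, pF, hFx, star_mul, map_mul (tensorHom f g), map_star (tensorHom f g)]
    simp only [mul_assoc]
  rw [e1, e1, map_one, one_mul, mul_comm] at h
  exact h

/-- The minimal norm is the spatial norm. -/
theorem minNorm_eq_spatialNorm (x : A ⊗[ℂ] B) : minNorm A B x = spatialNorm x := by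
  refine le_antisymm (csInf_le ⟨0, ?_⟩ ⟨_, isCStarNorm_spatialNorm, rfl⟩)
    (le_csInf ⟨_, _, isCStarNorm_spatialNorm, rfl⟩ ?_)
  · rintro _ ⟨ν, hν, rfl⟩
    exact hν.nonneg x
  · rintro _ ⟨ν, hν, rfl⟩
    have e : tensorHom (StarAlgHom.id ℂ A) (StarAlgHom.id ℂ B) x = x := by
      induction x using TensorProduct.induction_on with
      | zero => simp
      | tmul a b => rfl
      | add x y hx hy => rw [map_add, hx, hy]
    have := hν.spatialNorm_tensorHom_le (StarAlgHom.id ℂ A) (StarAlgHom.id ℂ B) x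
    rwa [e] at this

theorem IsCStarNorm.comp {ν : A ⊗[ℂ] B → ℝ} (hν : IsCStarNorm ν) {f : C →⋆ₐ[ℂ] A}
    {g : D →⋆ₐ[ℂ] B} (hf : Injective f) (hg : Injective g) :
    IsCStarNorm (fun x => ν (tensorHom f g x)) where
  eq_zero_iff x := by rw [hν.eq_zero_iff, map_eq_zero_iff _ (tensorHom_injective hf hg)]
  nonneg x := hν.nonneg _
  add_le x y := by rw [map_add]; exact hν.add_le _ _
  smul_eq c x := by rw [map_smul]; exact hν.smul_eq _ _
  mul_le x y := by rw [map_mul]; exact hν.mul_le _ _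
  star_eq x := by rw [tensorStar_eq, map_star, ← tensorStar_eq]; exact hν.star_eq _
  cstar x := by rw [tensorStar_eq, map_mul, map_star, ← tensorStar_eq]; exact hν.cstar _

/-- The minimal tensor norm is preserved by injective *-homomorphisms. -/
theorem minNorm_tensorHom {f : C →⋆ₐ[ℂ] A} {g : D →⋆ₐ[ℂ] B} (hf : Injective f)
    (hg : Injective g) (x : C ⊗[ℂ] D) : minNorm A B (tensorHom f g x) = minNorm C D x := by
  rw [minNorm_eq_spatialNorm, minNorm_eq_spatialNorm]
  refine le_antisymm (isCStarNorm_spatialNorm.spatialNorm_tensorHom_le f g x) ?_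
  rw [← minNorm_eq_spatialNorm]
  refine csInf_le ⟨0, ?_⟩ ⟨_, isCStarNorm_spatialNorm.comp hf hg, rfl⟩
  rintro _ ⟨ν, hν, rfl⟩
  exact hν.nonneg x

theorem minNorm_nonneg (x : A ⊗[ℂ] B) : 0 ≤ minNorm A B x := by
  rw [minNorm_eq_spatialNorm]
  exact spatialNorm_nonneg x

theorem minNorm_sum_le {n : ℕ} {a : Fin n → A} {b : Fin n → B} (ha : ∀ k, ‖a k‖ ≤ 1)
    (hb : ∀ k, ‖b k‖ ≤ 1) : minNorm A B (∑ k, a k ⊗ₜ[ℂ] b k) ≤ n := by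
  rw [minNorm_eq_spatialNorm]
  refine (isCStarNorm_spatialNorm.sum_le _ _).trans
    ((Finset.sum_le_sum fun k _ => (isCStarNorm_spatialNorm.tmul_le (a k) (b k)).trans
      (mul_le_one₀ (ha k) (norm_nonneg _) (hb k))).trans ?_)
  simp

end MinNorm

/-! ### Ultraproducts of C*-algebras -/

section Ultraproduct

variable {I : Type} (U : Ultrafilter I) (A : I → Type) [∀ i, CStarAlgebra (A i)]

theorem norm_one_le_one {A : Type} [CStarAlgebra A] : ‖(1 : A)‖ ≤ 1 := by
  rcases subsingleton_or_nontrivial A with h | h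
  · rw [Subsingleton.elim (1 : A) 0, norm_zero]; exact zero_le_one
  · rw [CStarRing.norm_one]

theorem tendsto_of_bounded {u : I → ℝ} {M : ℝ} (h : ∀ i, |u i| ≤ M) :
    ∃ l, Tendsto u U (𝓝 l) := by
  obtain ⟨l, -, hl⟩ := (isCompact_Icc (a := -M) (b := M)).ultrafilter_le_nhds (U.map u)
    (by
      rw [Ultrafilter.coe_map, le_principal_iff]
      exact Filter.mem_map.2 (Filter.univ_mem' fun i => abs_le.1 (h i)))
  exact ⟨l, hl⟩

/-- The star algebra of uniformly bounded families, the underlying algebra of the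
ℓ∞-product of the `A i`. -/
def bddAlg : StarSubalgebra ℂ (∀ i, A i) where
  carrier := {f | Bdd f}
  mul_mem' := by
    rintro f g ⟨M, hM⟩ ⟨N, hN⟩
    exact ⟨M * N, fun i => (norm_mul_le _ _).trans
      (mul_le_mul (hM i) (hN i) (norm_nonneg _) ((norm_nonneg _).trans (hM i)))⟩
  one_mem' := ⟨1, fun i => norm_one_le_one⟩
  add_mem' := by
    rintro f g ⟨M, hM⟩ ⟨N, hN⟩
    exact ⟨M + N, fun i => (norm_add_le _ _).trans (add_le_add (hM i) (hN i))⟩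
  zero_mem' := ⟨0, fun i => by simp⟩
  algebraMap_mem' := fun c => ⟨‖c‖ * 1, fun i => by
    rw [Pi.algebraMap_apply, Algebra.algebraMap_eq_smul_one, norm_smul]
    gcongr
    exact norm_one_le_one⟩
  star_mem' := by
    rintro f ⟨M, hM⟩
    exact ⟨M, fun i => by simpa using hM i⟩

/-- The algebra of bounded families, as a type of its own: it is to carry the topology of
the seminorm `f ↦ lim_U ‖f i‖` and not the one induced by the product topology. -/
def BddFam (_ : Ultrafilter I) : Type := bddAlg A

namespace BddFam

instance : Ring (BddFam A U) := inferInstanceAs (Ring (bddAlg A))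
instance : StarRing (BddFam A U) := inferInstanceAs (StarRing (bddAlg A))
instance : Algebra ℂ (BddFam A U) := inferInstanceAs (Algebra ℂ (bddAlg A))
instance : StarModule ℂ (BddFam A U) := inferInstanceAs (StarModule ℂ (bddAlg A))

variable {A U}

/-- A bounded family as an element of the algebra of bounded families. -/
def mk (f : ∀ i, A i) (hf : Bdd f) : BddFam A U := ⟨f, hf⟩

/-- The underlying family. -/
def val (x : BddFam A U) : ∀ i, A i := x.1

theorem bdd (x : BddFam A U) : Bdd x.val := x.2

theorem exists_lim (x : BddFam A U) : ∃ l, Tendsto (fun i => ‖x.val i‖) U (𝓝 l) := by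
  obtain ⟨M, hM⟩ := x.bdd
  exact tendsto_of_bounded U (M := M) fun i => by rw [abs_norm]; exact hM i

/-- The seminorm `f ↦ lim_U ‖f i‖` on bounded families. -/
def ulim (x : BddFam A U) : ℝ := x.exists_lim.choose

theorem tendsto_ulim (x : BddFam A U) : Tendsto (fun i => ‖x.val i‖) U (𝓝 x.ulim) :=
  x.exists_lim.choose_spec

/-- `BddFam.ulim` as a ring seminorm. -/
def seminorm : RingSeminorm (BddFam A U) where
  toFun := ulim
  map_zero' := by
    refine tendsto_nhds_unique (tendsto_ulim _) ?_
    have : (fun i => ‖(0 : BddFam A U).val i‖) = fun _ => (0 : ℝ) := by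
      funext i; exact norm_zero
    rw [this]
    exact tendsto_const_nhds
  add_le' x y := le_of_tendsto_of_tendsto' (tendsto_ulim _)
    ((tendsto_ulim x).add (tendsto_ulim y)) fun i => norm_add_le (x.val i) (y.val i)
  neg' x := tendsto_nhds_unique (tendsto_ulim _)
    ((tendsto_ulim x).congr fun i => (norm_neg (x.val i)).symm)
  mul_le' x y := le_of_tendsto_of_tendsto' (tendsto_ulim _)
    ((tendsto_ulim x).mul (tendsto_ulim y)) fun i => norm_mul_le (x.val i) (y.val i)

instance : SeminormedRing (BddFam A U) := (seminorm (A := A) (U := U)).toSeminormedRing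

theorem tendsto_norm (x : BddFam A U) : Tendsto (fun i => ‖x.val i‖) U (𝓝 ‖x‖) :=
  tendsto_ulim x

instance : NormedAlgebra ℂ (BddFam A U) where
  norm_smul_le c x := le_of_tendsto_of_tendsto' (tendsto_norm _)
    ((tendsto_norm x).const_mul ‖c‖) fun i => norm_smul_le c (x.val i)

theorem norm_star_eq (x : BddFam A U) : ‖star x‖ = ‖x‖ :=
  tendsto_nhds_unique (tendsto_norm _)
    ((tendsto_norm x).congr fun i => (norm_star (x.val i)).symm)

instance : NormedStarGroup (BddFam A U) where
  norm_star_le x := (norm_star_eq x).le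

theorem norm_star_mul_self (x : BddFam A U) : ‖star x * x‖ = ‖x‖ * ‖x‖ :=
  tendsto_nhds_unique (tendsto_norm _)
    (((tendsto_norm x).mul (tendsto_norm x)).congr fun i =>
      (CStarRing.norm_star_mul_self (x := x.val i)).symm)

theorem norm_le {x : BddFam A U} {r : ℝ} (h : ∀ i, ‖x.val i‖ ≤ r) : ‖x‖ ≤ r :=
  le_of_tendsto' (tendsto_norm x) h

end BddFam

/-- The C*-algebra ultraproduct: bounded families modulo those with `lim_U ‖f i‖ = 0`. -/
abbrev UProd : Type := SeparationQuotient (BddFam A U)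

namespace UProd

variable {A U}

instance : Star (UProd U A) where
  star := SeparationQuotient.lift (fun x => SeparationQuotient.mk (star x)) fun _ _ h =>
    SeparationQuotient.mk_eq_mk.2 (h.map continuous_star)

theorem star_mk (x : BddFam A U) :
    star (SeparationQuotient.mk x) = SeparationQuotient.mk (star x) := rfl

instance : StarRing (UProd U A) where
  star_involutive x := by
    obtain ⟨x, rfl⟩ := SeparationQuotient.surjective_mk x
    rw [star_mk, star_mk, star_star]
  star_mul x y := by
    obtain ⟨x, rfl⟩ := SeparationQuotient.surjective_mk x
    obtain ⟨y, rfl⟩ := SeparationQuotient.surjective_mk y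
    rw [← SeparationQuotient.mk_mul, star_mk, star_mk, star_mk, star_mul,
      SeparationQuotient.mk_mul]
  star_add x y := by
    obtain ⟨x, rfl⟩ := SeparationQuotient.surjective_mk x
    obtain ⟨y, rfl⟩ := SeparationQuotient.surjective_mk y
    rw [← SeparationQuotient.mk_add, star_mk, star_mk, star_mk, star_add,
      SeparationQuotient.mk_add]

instance : StarModule ℂ (UProd U A) where
  star_smul c x := by
    obtain ⟨x, rfl⟩ := SeparationQuotient.surjective_mk x
    rw [← SeparationQuotient.mk_smul, star_mk, star_mk, star_smul, SeparationQuotient.mk_smul]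

instance : CStarRing (UProd U A) where
  norm_mul_self_le x := by
    obtain ⟨x, rfl⟩ := SeparationQuotient.surjective_mk x
    rw [star_mk, ← SeparationQuotient.mk_mul, SeparationQuotient.norm_mk,
      SeparationQuotient.norm_mk, BddFam.norm_star_mul_self]

/-- Elements of the ultraproduct lift to families of no larger norm: rescale the entries
of an arbitrary lift that are too long. -/
theorem exists_lift (b : UProd U A) :
    ∃ x : BddFam A U, (∀ i, ‖x.val i‖ ≤ ‖b‖) ∧ SeparationQuotient.mk x = b := by
  obtain ⟨x, rfl⟩ := SeparationQuotient.surjective_mk b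
  rw [SeparationQuotient.norm_mk]
  set r := ‖x‖
  have hr : 0 ≤ r := norm_nonneg _
  let s : I → ℝ := fun i => min 1 (r / ‖x.val i‖)
  have hs0 : ∀ i, 0 ≤ s i := fun i => by positivity
  let g : ∀ i, A i := fun i => (s i : ℂ) • x.val i
  have hg : ∀ i, ‖g i‖ ≤ r := fun i => by
    rw [norm_smul, Complex.norm_real, Real.norm_of_nonneg (hs0 i)]
    rcases eq_or_ne ‖x.val i‖ 0 with h | h
    · rw [h, mul_zero]; exact hr
    · calc s i * ‖x.val i‖ ≤ r / ‖x.val i‖ * ‖x.val i‖ := by gcongr; exact min_le_right _ _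
        _ = r := div_mul_cancel₀ _ h
  refine ⟨BddFam.mk g ⟨r, hg⟩, hg, ?_⟩
  rw [← sub_eq_zero, ← SeparationQuotient.mk_sub, ← norm_eq_zero, SeparationQuotient.norm_mk]
  refine tendsto_nhds_unique (BddFam.tendsto_norm _) ?_
  -- the entries change by at most the excess of `‖x i‖` over its limit `r`
  have hle : ∀ i, ‖g i - x.val i‖ ≤ |‖x.val i‖ - r| := fun i => by
    have e : g i - x.val i = ((s i - 1 : ℝ) : ℂ) • x.val i := by
      simp [g, sub_smul]
    rw [e, norm_smul, Complex.norm_real, Real.norm_eq_abs]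
    rcases eq_or_ne ‖x.val i‖ 0 with h | h
    · rw [h, mul_zero]; positivity
    · have hp : 0 < ‖x.val i‖ := lt_of_le_of_ne (norm_nonneg _) h.symm
      rcases le_total ‖x.val i‖ r with h1 | h1
      · have : s i = 1 := min_eq_left ((one_le_div hp).2 h1)
        rw [this]; simp
      · have : s i = r / ‖x.val i‖ := min_eq_right ((div_le_one hp).2 h1)
        rw [this, ← abs_of_pos hp, ← abs_mul, abs_of_pos hp, sub_mul, div_mul_cancel₀ _ h,
          one_mul, abs_sub_comm]
  refine squeeze_zero (fun i => norm_nonneg _) hle ?_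
  have h := ((BddFam.tendsto_norm x).sub_const r).abs
  rwa [sub_self, abs_zero] at h

/-- Absolutely convergent series converge: sum norm-controlled lifts entrywise. -/
instance : CompleteSpace (UProd U A) := by
  refine NormedAddCommGroup.completeSpace_of_summable_imp_tendsto fun u hu => ?_
  choose x hx hxu using fun n => exists_lift (u n)
  have hsum : ∀ i, Summable fun n => (x n).val i := fun i =>
    Summable.of_norm_bounded hu fun n => hx n i
  let F : ∀ i, A i := fun i => ∑' n, (x n).val i
  have hF : Bdd F := ⟨∑' n, ‖u n‖, fun i => tsum_of_norm_bounded hu.hasSum fun n => hx n i⟩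
  refine ⟨SeparationQuotient.mk (BddFam.mk F hF), ?_⟩
  rw [tendsto_iff_norm_sub_tendsto_zero]
  have key : ∀ N, ‖∑ n ∈ Finset.range N, u n - SeparationQuotient.mk (BddFam.mk F hF)‖
      ≤ ∑' n, ‖u (n + N)‖ := fun N => by
    have e : ∑ n ∈ Finset.range N, u n
        = SeparationQuotient.mk (∑ n ∈ Finset.range N, x n) := by
      rw [Finset.sum_congr rfl fun n _ => (hxu n).symm]
      exact (map_sum (SeparationQuotient.mkAddMonoidHom (M := BddFam A U)) _ _).symm
    rw [e, ← SeparationQuotient.mk_sub, SeparationQuotient.norm_mk, norm_sub_rev]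
    refine BddFam.norm_le fun i => ?_
    have hval : (BddFam.mk F hF - ∑ n ∈ Finset.range N, x n : BddFam A U).val i
        = ∑' n, (x (n + N)).val i := by
      have h1 : (∑ n ∈ Finset.range N, x n : BddFam A U).val i
          = ∑ n ∈ Finset.range N, (x n).val i := by
        let ev : BddFam A U →+ A i :=
          { toFun := fun y => y.val i, map_zero' := rfl, map_add' := fun _ _ => rfl }
        exact map_sum ev _ _
      change F i - (∑ n ∈ Finset.range N, x n : BddFam A U).val i = _
      rw [h1, sub_eq_iff_eq_add']
      exact ((hsum i).sum_add_tsum_nat_add N).symm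
    rw [hval]
    exact tsum_of_norm_bounded ((summable_nat_add_iff N).2 hu).hasSum fun n => hx _ i
  exact squeeze_zero (fun _ => norm_nonneg _) key (tendsto_sum_nat_add fun n => ‖u n‖)

instance : CStarAlgebra (UProd U A) where

end UProd

open Classical in
/-- C*-algebra ultraproducts exist. -/
theorem exists_ultraproduct :
    ∃ (B : Type) (_ : CStarAlgebra B) (π : (∀ i, A i) → B), IsCStarUltraproduct U A B π := by
  -- the value of `π` on unbounded families is immaterial
  let π : (∀ i, A i) → UProd U A := fun f =>
    if hf : Bdd f then SeparationQuotient.mk (BddFam.mk f hf) else 0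
  have hπ : ∀ f (hf : Bdd f), π f = SeparationQuotient.mk (BddFam.mk f hf) := fun f hf =>
    dif_pos hf
  refine ⟨UProd U A, inferInstance, π, ?_, ?_, ?_, ?_, ?_, ?_, ?_⟩
  · rw [hπ 1 (bddAlg A).one_mem]; rfl
  · intro f g hf hg
    rw [hπ _ hf, hπ _ hg, hπ _ ((bddAlg A).add_mem hf hg)]; rfl
  · intro f g hf hg
    rw [hπ _ hf, hπ _ hg, hπ _ ((bddAlg A).mul_mem hf hg)]; rfl
  · intro f hf
    rw [hπ _ hf, hπ _ ((bddAlg A).star_mem' hf)]; rfl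
  · intro c f hf
    rw [hπ _ hf, hπ _ ((bddAlg A).smul_mem hf c)]; rfl
  · intro f hf
    rw [hπ _ hf, SeparationQuotient.norm_mk]
    exact BddFam.tendsto_norm (BddFam.mk f hf)
  · intro b
    obtain ⟨x, hx, rfl⟩ := UProd.exists_lift b
    exact ⟨x.val, hx, hπ _ x.bdd⟩

end Ultraproduct

/-! ### Łoś's theorem -/

section Los

theorem CTerm.exists_bound {n : ℕ} (t : CTerm n) : ∃ M : ℝ, ∀ (A : Type) [CStarAlgebra A]
    (a : Fin n → A), (∀ k, ‖a k‖ ≤ 1) → ‖t.eval a‖ ≤ M := by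
  induction t with
  | var i => exact ⟨1, fun A _ a ha => by simpa only [CTerm.eval] using ha i⟩
  | one => exact ⟨1, fun A _ a ha => by simpa only [CTerm.eval] using norm_one_le_one⟩
  | add s t hs ht =>
    obtain ⟨M, hM⟩ := hs
    obtain ⟨N, hN⟩ := ht
    exact ⟨M + N, fun A _ a ha => by
      simpa only [CTerm.eval] using norm_add_le_of_le (hM A a ha) (hN A a ha)⟩
  | mul s t hs ht =>
    obtain ⟨M, hM⟩ := hs
    obtain ⟨N, hN⟩ := ht
    exact ⟨M * N, fun A _ a ha => by
      simpa only [CTerm.eval] using norm_mul_le_of_le (hM A a ha) (hN A a ha)⟩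
  | star t ht =>
    obtain ⟨M, hM⟩ := ht
    exact ⟨M, fun A _ a ha => by
      simpa only [CTerm.eval, norm_star] using hM A a ha⟩
  | smul c t ht =>
    obtain ⟨M, hM⟩ := ht
    exact ⟨‖c‖ * M, fun A _ a ha => by
      rw [CTerm.eval, norm_smul]
      exact mul_le_mul_of_nonneg_left (hM A a ha) (norm_nonneg c)⟩

instance {A : Type} [CStarAlgebra A] : Nonempty {x : A // ‖x‖ ≤ 1} := ⟨⟨0, by simp⟩⟩

theorem norm_snoc_le {A : Type} [CStarAlgebra A] {n : ℕ} {a : Fin n → A}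
    (ha : ∀ k, ‖a k‖ ≤ 1) {b : A} (hb : ‖b‖ ≤ 1) (k : Fin (n + 1)) :
    ‖(Fin.snoc a b : Fin (n + 1) → A) k‖ ≤ 1 := by
  induction k using Fin.lastCases with
  | last => simpa using hb
  | cast k => simpa using ha k

/-- Formulas are bounded on unit balls, uniformly over all C*-algebras; this keeps the
suprema and infima in `Formula.interp` away from their junk values. -/
theorem Formula.exists_bound {n : ℕ} (φ : Formula n) : ∃ M : ℝ, ∀ (A : Type)
    [CStarAlgebra A] (a : Fin n → A), (∀ k, ‖a k‖ ≤ 1) → |φ.interp A a| ≤ M := by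
  induction φ with
  | atom t =>
    obtain ⟨M, hM⟩ := t.exists_bound
    exact ⟨M, fun A _ a ha => by rw [Formula.interp, abs_norm]; exact hM A a ha⟩
  | comb u hu phis ih =>
    choose M hM using ih
    have hK : IsCompact (Set.univ.pi fun j => Set.Icc (-M j) (M j)) :=
      isCompact_univ_pi fun j => isCompact_Icc
    obtain ⟨C, hC⟩ := hK.exists_bound_of_continuousOn hu.continuousOn
    exact ⟨C, fun A _ a ha => hC _ fun j _ => abs_le.1 (hM j A a ha)⟩
  | sup φ ih =>
    obtain ⟨M, hM⟩ := ih
    refine ⟨M, fun A _ a ha => ?_⟩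
    have h := fun b : {x : A // ‖x‖ ≤ 1} => abs_le.1 (hM A _ (norm_snoc_le ha b.2))
    exact abs_le.2 ⟨(h ⟨0, by simp⟩).1.trans
      (le_ciSup (f := fun b : {x : A // ‖x‖ ≤ 1} => φ.interp A (Fin.snoc a b.1))
        ⟨M, by rintro _ ⟨b, rfl⟩; exact (h b).2⟩ _), ciSup_le fun b => (h b).2⟩
  | inf φ ih =>
    obtain ⟨M, hM⟩ := ih
    refine ⟨M, fun A _ a ha => ?_⟩
    have h := fun b : {x : A // ‖x‖ ≤ 1} => abs_le.1 (hM A _ (norm_snoc_le ha b.2))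
    exact abs_le.2 ⟨le_ciInf fun b => (h b).1,
      (ciInf_le (f := fun b : {x : A // ‖x‖ ≤ 1} => φ.interp A (Fin.snoc a b.1))
        ⟨-M, by rintro _ ⟨b, rfl⟩; exact (h b).1⟩ ⟨0, by simp⟩).trans (h _).2⟩

theorem neg_iSup_neg {ι : Type} (u : ι → ℝ) : -⨆ b, -u b = ⨅ b, u b := by
  rw [iInf, Real.sInf_def, iSup]
  congr 2
  ext x
  simp [neg_eq_iff_eq_neg]

variable {I : Type} {U : Ultrafilter I} {A : I → Type} [∀ i, CStarAlgebra (A i)]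
  {B : Type} [CStarAlgebra B] {π : (∀ i, A i) → B}

namespace IsCStarUltraproduct

theorem eval_eq (h : IsCStarUltraproduct U A B π) {n : ℕ} (t : CTerm n)
    (f : Fin n → ∀ i, A i) (hf : ∀ k i, ‖f k i‖ ≤ 1) :
    Bdd (fun i => t.eval fun k => f k i) ∧
      π (fun i => t.eval fun k => f k i) = t.eval fun k => π (f k) := by
  refine ⟨?_, ?_⟩
  · obtain ⟨M, hM⟩ := t.exists_bound
    exact ⟨M, fun i => hM _ _ fun k => hf k i⟩
  have hb : ∀ t : CTerm n, Bdd (fun i => t.eval fun k => f k i) := fun t => by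
    obtain ⟨M, hM⟩ := t.exists_bound
    exact ⟨M, fun i => hM _ _ fun k => hf k i⟩
  induction t with
  | var i => simp only [CTerm.eval]
  | one =>
    simp only [CTerm.eval]
    exact h.map_one
  | add s t hs ht =>
    simp only [CTerm.eval]
    exact (h.map_add _ _ (hb s) (hb t)).trans (congr_arg₂ _ hs ht)
  | mul s t hs ht =>
    simp only [CTerm.eval]
    exact (h.map_mul _ _ (hb s) (hb t)).trans (congr_arg₂ _ hs ht)
  | star t ht =>
    simp only [CTerm.eval]
    exact (h.map_star _ (hb t)).trans (congr_arg _ ht)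
  | smul c t ht =>
    simp only [CTerm.eval]
    exact (h.map_smul c _ (hb t)).trans (congr_arg _ ht)

theorem norm_le_one (h : IsCStarUltraproduct U A B π) {f : ∀ i, A i}
    (hf : ∀ i, ‖f i‖ ≤ 1) : ‖π f‖ ≤ 1 :=
  le_of_tendsto' (h.norm_eq f ⟨1, hf⟩) hf

/-- Suprema over unit balls pass to the ultraproduct. -/
theorem tendsto_iSup (h : IsCStarUltraproduct U A B π) {F : ∀ i, A i → ℝ} {G : B → ℝ}
    {M : ℝ} (hF : ∀ i x, ‖x‖ ≤ 1 → F i x ≤ M) (hG : ∀ x, ‖x‖ ≤ 1 → G x ≤ M)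
    (hFG : ∀ g : ∀ i, A i, (∀ i, ‖g i‖ ≤ 1) →
      Tendsto (fun i => F i (g i)) U (𝓝 (G (π g)))) :
    Tendsto (fun i => ⨆ b : {x : A i // ‖x‖ ≤ 1}, F i b.1) U
      (𝓝 (⨆ b : {x : B // ‖x‖ ≤ 1}, G b.1)) := by
  have bF : ∀ i, BddAbove (Set.range fun b : {x : A i // ‖x‖ ≤ 1} => F i b.1) := fun i =>
    ⟨M, by rintro _ ⟨b, rfl⟩; exact hF i _ b.2⟩
  have bG : BddAbove (Set.range fun b : {x : B // ‖x‖ ≤ 1} => G b.1) :=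
    ⟨M, by rintro _ ⟨b, rfl⟩; exact hG _ b.2⟩
  refine tendsto_order.2 ⟨fun c hc => ?_, fun c hc => ?_⟩
  · obtain ⟨⟨b, hb⟩, hcb⟩ := exists_lt_of_lt_ciSup hc
    obtain ⟨g, hg, rfl⟩ := h.surj b
    have hg1 := fun i => (hg i).trans hb
    filter_upwards [(hFG g hg1).eventually_const_lt hcb] with i hi
    exact hi.trans_le (le_ciSup (bF i) ⟨g i, hg1 i⟩)
  · set l := ⨆ b : {x : B // ‖x‖ ≤ 1}, G b.1
    have hd : 0 < (c - l) / 2 := by linarith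
    -- a family that almost attains the suprema
    have hex : ∀ i, ∃ b : {x : A i // ‖x‖ ≤ 1},
        (⨆ b : {x : A i // ‖x‖ ≤ 1}, F i b.1) - (c - l) / 2 < F i b.1 := fun i =>
      exists_lt_of_lt_ciSup (by linarith)
    choose g hg using hex
    have hl : G (π fun i => (g i).1) ≤ l :=
      le_ciSup bG ⟨_, h.norm_le_one fun i => (g i).2⟩
    filter_upwards [(hFG (fun i => (g i).1) fun i => (g i).2).eventually_lt_const
      (show G (π fun i => (g i).1) < (c + l) / 2 by linarith)] with i hi
    have := hg i
    linarith

/-- Łoś's theorem for formulas of continuous logic. -/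
theorem tendsto_interp (h : IsCStarUltraproduct U A B π) {n : ℕ} (φ : Formula n)
    (f : Fin n → ∀ i, A i) (hf : ∀ k i, ‖f k i‖ ≤ 1) :
    Tendsto (fun i => φ.interp (A i) fun k => f k i) U (𝓝 (φ.interp B fun k => π (f k))) := by
  have hsnoc : ∀ {n : ℕ} (f : Fin n → ∀ i, A i) (g : ∀ i, A i),
      (∀ i, (fun k => (Fin.snoc f g : Fin (n + 1) → ∀ i, A i) k i)
        = Fin.snoc (fun k => f k i) (g i)) ∧
      (fun k => π ((Fin.snoc f g : Fin (n + 1) → ∀ i, A i) k))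
        = Fin.snoc (fun k => π (f k)) (π g) := fun f g => by
    refine ⟨fun i => ?_, ?_⟩ <;>
    · funext k
      induction k using Fin.lastCases <;> simp
  have hle : ∀ {n : ℕ} (f : Fin n → ∀ i, A i), (∀ k i, ‖f k i‖ ≤ 1) →
      ∀ g : ∀ i, A i, (∀ i, ‖g i‖ ≤ 1) →
      ∀ k i, ‖(Fin.snoc f g : Fin (n + 1) → ∀ i, A i) k i‖ ≤ 1 := fun f hf g hg k i => by
    induction k using Fin.lastCases with
    | last => simpa using hg i
    | cast k => simpa using hf k i
  induction φ with
  | atom t =>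
    have ht := h.eval_eq t f hf
    have := h.norm_eq _ ht.1
    rwa [ht.2] at this
  | comb u hu phis ih =>
    exact (hu.tendsto _).comp (tendsto_pi_nhds.2 fun j => ih j f hf)
  | sup φ ih =>
    obtain ⟨M, hM⟩ := φ.exists_bound
    refine h.tendsto_iSup (F := fun i x => φ.interp (A i) (Fin.snoc (fun k => f k i) x))
      (G := fun x => φ.interp B (Fin.snoc (fun k => π (f k)) x)) (M := M)
      (fun i x hx => (abs_le.1 (hM _ _ (norm_snoc_le (fun k => hf k i) hx))).2)
      (fun x hx => (abs_le.1 (hM _ _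
        (norm_snoc_le (fun k => h.norm_le_one (hf k)) hx))).2) fun g hg => ?_
    have := ih (Fin.snoc f g) (hle f hf g hg)
    rw [(hsnoc f g).2] at this
    simpa only [(hsnoc f g).1] using this
  | inf φ ih =>
    obtain ⟨M, hM⟩ := φ.exists_bound
    have := h.tendsto_iSup
      (F := fun i x => -φ.interp (A i) (Fin.snoc (fun k => f k i) x))
      (G := fun x => -φ.interp B (Fin.snoc (fun k => π (f k)) x)) (M := M)
      (fun i x hx => neg_le.1 (abs_le.1 (hM _ _ (norm_snoc_le (fun k => hf k i) hx))).1)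
      (fun x hx => neg_le.1 (abs_le.1 (hM _ _
        (norm_snoc_le (fun k => h.norm_le_one (hf k)) hx))).1) fun g hg => ?_
    · have h2 := this.neg
      simpa only [neg_iSup_neg, Formula.interp] using h2
    · have := ih (Fin.snoc f g) (hle f hf g hg)
      rw [(hsnoc f g).2] at this
      simpa only [(hsnoc f g).1] using this.neg

/-- By Łoś's theorem, an ultraproduct of models of `T` is a model of `T`. -/
theorem models (h : IsCStarUltraproduct U A B π) {T : CStarTheory}
    (hA : ∀ i, Models (A i) T) : Models B T := fun σ hσ => by
  have := h.tendsto_interp σ finZeroElim fun k => k.elim0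
  have e1 : (fun i => σ.interp (A i) fun k => (finZeroElim : Fin 0 → ∀ i, A i) k i)
      = fun _ => (0 : ℝ) := by
    funext i
    rw [← hA i σ hσ]
    exact congr_arg _ (Subsingleton.elim _ _)
  rw [e1] at this
  rw [← tendsto_nhds_unique this tendsto_const_nhds]
  exact congr_arg _ (Subsingleton.elim _ _)

end IsCStarUltraproduct

/-- Łoś's theorem passes from formulas to their uniform limits, hence applies to `P^min` if it is
definable. -/
theorem MinDefinableOver.minUltraContinuous {T : CStarTheory} (hT : MinDefinableOver T) :
    MinUltraContinuous T := by
  intro I U A _ hA B _ π h n f g hf hg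
  have happ : ∀ k i, ‖(Fin.append f g : Fin (n + n) → ∀ i, A i) k i‖ ≤ 1 := fun k i => by
    induction k using Fin.addCases with
    | left k => simpa using hf k i
    | right k => rw [Fin.append_right]; exact hg k i
  have e1 : ∀ i, (fun k => (Fin.append f g : Fin (n + n) → ∀ i, A i) k i)
      = Fin.append (fun k => f k i) fun k => g k i := fun i => by
    funext k; induction k using Fin.addCases with
    | left k => simp only [Fin.append_left]
    | right k => simp only [Fin.append_right]
  have e2 : (fun k => π ((Fin.append f g : Fin (n + n) → ∀ i, A i) k))
      = Fin.append (fun k => π (f k)) fun k => π (g k) := by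
    funext k; induction k using Fin.addCases with
    | left k => simp only [Fin.append_left]
    | right k => simp only [Fin.append_right]
  rw [Metric.tendsto_nhds]
  intro ε hε
  obtain ⟨φ, hφ⟩ := hT n (ε / 4) (by positivity)
  have hlim := h.tendsto_interp φ _ happ
  simp only [e1, e2] at hlim
  filter_upwards [Metric.tendsto_nhds.1 hlim (ε / 4) (by positivity)] with i hi
  have h1 := abs_le.1 (hφ (A i) (hA i) _ _ (fun k => hf k i) fun k => hg k i)
  have h2 := abs_le.1 (hφ B (h.models hA) _ _ (fun k => h.norm_le_one (hf k))
    fun k => h.norm_le_one (hg k))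
  rw [Real.dist_eq, abs_lt] at hi ⊢
  constructor <;> linarith [h1.1, h1.2, h2.1, h2.2, hi.1, hi.2]

end Los

/-! ### Definability of the minimal norm -/

section Definability

/-- The minimal norm of `∑ a k ⊗ b k` depends only on the norms of the *-polynomials in
`(a, b)`, and not on the ambient C*-algebra: both tuples generate the same C*-algebra,
and the minimal norm does not change on passing to C*-subalgebras. -/
theorem minNorm_eq_of_norm_eval_eq {B B' : Type} [CStarAlgebra B] [CStarAlgebra B'] {n : ℕ}
    (a b : Fin n → B) (a' b' : Fin n → B')
    (h : ∀ t : CTerm (n + n), ‖t.eval (Fin.append a b)‖ = ‖t.eval (Fin.append a' b')‖) :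
    minNorm B B (∑ k, a k ⊗ₜ[ℂ] b k) = minNorm B' B' (∑ k, a' k ⊗ₜ[ℂ] b' k) := by
  -- the C*-subalgebra of `B × B'` generated by the pairs `(a k, a' k)` and `(b k, b' k)`
  let ev : CTerm (n + n) → B × B' := fun t =>
    (t.eval (Fin.append a b), t.eval (Fin.append a' b'))
  let S : StarSubalgebra ℂ (B × B') :=
    { carrier := Set.range ev
      mul_mem' := by
        rintro _ _ ⟨s, rfl⟩ ⟨t, rfl⟩
        exact ⟨s.mul t, by simp only [ev, CTerm.eval, Prod.mk_mul_mk]⟩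
      one_mem' := ⟨CTerm.one, by simp only [ev, CTerm.eval, Prod.mk_one_one]⟩
      add_mem' := by
        rintro _ _ ⟨s, rfl⟩ ⟨t, rfl⟩
        exact ⟨s.add t, by simp only [ev, CTerm.eval, Prod.mk_add_mk]⟩
      zero_mem' := ⟨CTerm.smul 0 CTerm.one, by
        simp only [ev, CTerm.eval, zero_smul, Prod.mk_zero_zero]⟩
      algebraMap_mem' := fun c => ⟨CTerm.smul c CTerm.one, by
        simp only [ev, CTerm.eval, Algebra.algebraMap_eq_smul_one]; rfl⟩
      star_mem' := by
        rintro _ ⟨t, rfl⟩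
        exact ⟨t.star, by simp only [ev, CTerm.eval]; rfl⟩ }
  let D := S.topologicalClosure
  have : IsClosed (D : Set (B × B')) := S.isClosed_topologicalClosure
  have hD : ∀ z ∈ D, ‖z.1‖ = ‖z.2‖ := by
    have hcl : IsClosed {z : B × B' | ‖z.1‖ = ‖z.2‖} :=
      isClosed_eq continuous_fst.norm continuous_snd.norm
    intro z hz
    exact closure_minimal (t := {z : B × B' | ‖z.1‖ = ‖z.2‖})
      (by rintro _ ⟨t, rfl⟩; exact h t) hcl hz
  have hmem : ∀ k : Fin (n + n), (Fin.append a b k, Fin.append a' b' k) ∈ D := fun k =>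
    S.le_topologicalClosure ⟨CTerm.var k, by simp only [ev, CTerm.eval]⟩
  let p : D →⋆ₐ[ℂ] B := (StarAlgHom.fst ℂ B B').comp D.subtype
  let q : D →⋆ₐ[ℂ] B' := (StarAlgHom.snd ℂ B B').comp D.subtype
  have hp : Injective p := (injective_iff_map_eq_zero p).2 fun z hz => by
    have h1 : z.1.1 = 0 := hz
    have h2 : z.1.2 = 0 := by
      rw [← norm_eq_zero, ← hD z.1 z.2, h1, norm_zero]
    exact Subtype.ext (Prod.ext h1 h2)
  have hq : Injective q := (injective_iff_map_eq_zero q).2 fun z hz => by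
    have h2 : z.1.2 = 0 := hz
    have h1 : z.1.1 = 0 := by
      rw [← norm_eq_zero, hD z.1 z.2, h2, norm_zero]
    exact Subtype.ext (Prod.ext h1 h2)
  let c : Fin n → D := fun k => ⟨(a k, a' k), by simpa using hmem (Fin.castAdd n k)⟩
  let d : Fin n → D := fun k => ⟨(b k, b' k), by
    simpa only [Fin.append_right] using hmem (Fin.natAdd n k)⟩
  have ep := minNorm_tensorHom hp hp (∑ k, c k ⊗ₜ[ℂ] d k)
  have eq := minNorm_tensorHom hq hq (∑ k, c k ⊗ₜ[ℂ] d k)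
  simp only [map_sum, tensorHom_tmul] at ep eq
  exact ep.trans eq.symm

/-- A pair of `n`-tuples in the unit ball of some model of `T`. -/
structure ModelTuple (T : CStarTheory) (n : ℕ) where
  carrier : Type
  [inst : CStarAlgebra carrier]
  models : Models carrier T
  a : Fin n → carrier
  b : Fin n → carrier
  ha : ∀ k, ‖a k‖ ≤ 1
  hb : ∀ k, ‖b k‖ ≤ 1

attribute [instance] ModelTuple.inst

namespace ModelTuple

variable {T : CStarTheory} {n : ℕ}

/-- The value of `P^min` at the tuple. -/
def P (x : ModelTuple T n) : ℝ := minNorm x.carrier x.carrier (∑ k, x.a k ⊗ₜ[ℂ] x.b k)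

/-- The norm of a *-polynomial at the tuple. -/
def nrm (x : ModelTuple T n) (t : CTerm (n + n)) : ℝ := ‖t.eval (Fin.append x.a x.b)‖

theorem P_nonneg (x : ModelTuple T n) : 0 ≤ x.P := minNorm_nonneg _

theorem P_le (x : ModelTuple T n) : x.P ≤ n := minNorm_sum_le x.ha x.hb

/-- Along an ultrafilter, the values of `P` and of all `nrm t` converge to those at a
tuple in the ultraproduct. -/
theorem exists_limit (hT : MinUltraContinuous T) {I : Type} (U : Ultrafilter I)
    (x : I → ModelTuple T n) : ∃ (B : Type) (_ : CStarAlgebra B) (a b : Fin n → B),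
      Tendsto (fun i => (x i).P) U (𝓝 (minNorm B B (∑ k, a k ⊗ₜ[ℂ] b k))) ∧
      ∀ t : CTerm (n + n),
        Tendsto (fun i => (x i).nrm t) U (𝓝 ‖t.eval (Fin.append a b)‖) := by
  obtain ⟨B, _, π, h⟩ := exists_ultraproduct U fun i => (x i).carrier
  let f : Fin n → ∀ i, (x i).carrier := fun k i => (x i).a k
  let g : Fin n → ∀ i, (x i).carrier := fun k i => (x i).b k
  refine ⟨B, inferInstance, fun k => π (f k), fun k => π (g k),
    hT I U _ (fun i => (x i).models) B π h n f g (fun k i => (x i).ha k)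
      fun k i => (x i).hb k, fun t => ?_⟩
  have hfg : ∀ k i, ‖(Fin.append f g : Fin (n + n) → ∀ i, (x i).carrier) k i‖ ≤ 1 :=
    fun k i => by
      induction k using Fin.addCases with
      | left k => rw [Fin.append_left]; exact (x i).ha k
      | right k => rw [Fin.append_right]; exact (x i).hb k
  have := h.tendsto_interp (Formula.atom t) _ hfg
  have e1 : ∀ i, (fun k => (Fin.append f g : Fin (n + n) → ∀ i, (x i).carrier) k i)
      = Fin.append (x i).a (x i).b := fun i => by
    funext k
    induction k using Fin.addCases with
    | left k => simp only [Fin.append_left]; rfl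
    | right k => simp only [Fin.append_right]; rfl
  have e2 : (fun k => π ((Fin.append f g : Fin (n + n) → ∀ i, (x i).carrier) k))
      = Fin.append (fun k => π (f k)) fun k => π (g k) := by
    funext k
    induction k using Fin.addCases with
    | left k => simp only [Fin.append_left]
    | right k => simp only [Fin.append_right]
  simp only [e1, e2, Formula.interp] at this
  exact this

open Classical in
/-- Compactness: if `P^min` commutes with ultraproducts, then up to `ε` its value is
controlled by the norms of finitely many *-polynomials. -/
theorem exists_control (hT : MinUltraContinuous T) (n : ℕ) {ε : ℝ} (hε : 0 < ε) :
    ∃ (S : Finset (CTerm (n + n))) (δ : ℝ), 0 < δ ∧ ∀ x y : ModelTuple T n,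
      (∀ t ∈ S, |x.nrm t - y.nrm t| ≤ δ) → |x.P - y.P| ≤ ε := by
  by_contra! hcon
  have hpos : ∀ N : ℕ, (0 : ℝ) < 1 / ((N : ℝ) + 1) := fun N => by positivity
  choose x y hxy hP using fun i : Finset (CTerm (n + n)) × ℕ => hcon i.1 _ (hpos i.2)
  let U : Ultrafilter (Finset (CTerm (n + n)) × ℕ) := Ultrafilter.of atTop
  have hU : (U : Filter (Finset (CTerm (n + n)) × ℕ)) ≤ atTop := Ultrafilter.of_le _
  obtain ⟨B, _, a, b, hB, ht⟩ := exists_limit hT U x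
  obtain ⟨B', _, a', b', hB', ht'⟩ := exists_limit hT U y
  have key : minNorm B B (∑ k, a k ⊗ₜ[ℂ] b k) = minNorm B' B' (∑ k, a' k ⊗ₜ[ℂ] b' k) := by
    refine minNorm_eq_of_norm_eval_eq a b a' b' fun t => ?_
    rw [← sub_eq_zero]
    refine tendsto_nhds_unique ((ht t).sub (ht' t)) (squeeze_zero_norm' ?_
      ((tendsto_one_div_add_atTop_nhds_zero_nat (𝕜 := ℝ)).comp
        ((tendsto_snd.mono_left (prod_atTop_atTop_eq
          (α := Finset (CTerm (n + n))) (β := ℕ)).ge).mono_left hU)))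
    filter_upwards [hU (eventually_ge_atTop (({t}, 0) : Finset (CTerm (n + n)) × ℕ))]
      with i hi
    exact hxy i t (hi.1 (Finset.mem_singleton_self t))
  have hlim := (hB.sub hB').abs
  rw [key, sub_self, abs_zero] at hlim
  exact absurd (ge_of_tendsto' hlim fun i => (hP i).le) (not_le.2 hε)

/-- The quantifier-free approximants: extend the almost-function
`(‖t(a, b)‖)_{t ∈ S} ↦ P^min(a, b)` to a Lipschitz function on `ℝ^S` by the formula of
McShane, `u v = inf_x (P x + K dist (τ x) v)`. -/
theorem exists_isQF (hT : MinUltraContinuous T) (n : ℕ) {ε : ℝ} (hε : 0 < ε) :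
    ∃ φ : Formula (n + n), φ.IsQF ∧ ∀ x : ModelTuple T n,
      |x.P - φ.interp x.carrier (Fin.append x.a x.b)| ≤ ε := by
  obtain ⟨S, δ, hδ, hS⟩ := exists_control hT n hε
  let e := S.equivFin
  let τ : ModelTuple T n → Fin S.card → ℝ := fun x j => x.nrm (e.symm j).1
  -- points at distance more than `δ` contribute at least `K * δ = n`, a bound for `P`
  let K : NNReal := ⟨n / δ, by positivity⟩
  have hK : (K : ℝ) * δ = n := div_mul_cancel₀ _ hδ.ne'
  let u : (Fin S.card → ℝ) → ℝ := fun v => ⨅ x : ModelTuple T n, (x.P + K * dist (τ x) v)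
  have bdd : ∀ v, BddBelow (Set.range fun x : ModelTuple T n => x.P + K * dist (τ x) v) :=
    fun v => ⟨0, by
      rintro _ ⟨x, rfl⟩
      exact add_nonneg x.P_nonneg (by positivity)⟩
  have hu : Continuous u := by
    rcases isEmpty_or_nonempty (ModelTuple T n) with h | h
    · have : u = fun _ => 0 := funext fun v => Real.iInf_of_isEmpty _
      rw [this]
      exact continuous_const
    refine (LipschitzWith.of_le_add_mul K fun v w => ?_).continuous
    rw [← sub_le_iff_le_add]
    refine le_ciInf fun x => ?_
    have h1 : u v ≤ x.P + K * dist (τ x) v := ciInf_le (bdd v) x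
    have h2 : (K : ℝ) * dist (τ x) v ≤ K * (dist (τ x) w + dist v w) := by
      gcongr
      rw [dist_comm v w]
      exact dist_triangle _ _ _
    linarith
  refine ⟨Formula.comb u hu fun j => Formula.atom (e.symm j).1,
    Formula.IsQF.comb _ _ _ fun j => Formula.IsQF.atom _, fun y => ?_⟩
  change |y.P - u (τ y)| ≤ ε
  have h1 : u (τ y) ≤ y.P := by
    simpa using ciInf_le (bdd (τ y)) y
  have h2 : y.P - ε ≤ u (τ y) := by
    have : Nonempty (ModelTuple T n) := ⟨y⟩
    refine le_ciInf fun x => ?_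
    have h0 : (0 : ℝ) ≤ K * dist (τ x) (τ y) := by positivity
    rcases le_total (dist (τ x) (τ y)) δ with hd | hd
    · have := hS x y fun t ht => by
        have := (dist_le_pi_dist (τ x) (τ y) (e ⟨t, ht⟩)).trans hd
        simpa only [τ, Equiv.symm_apply_apply, Real.dist_eq] using this
      linarith [(abs_le.1 this).1]
    · have h3 : (K : ℝ) * δ ≤ K * dist (τ x) (τ y) := by gcongr
      linarith [y.P_le, x.P_nonneg]
  rw [abs_le]
  constructor <;> linarith

end ModelTuple

end Definability

/-- Let `T` be a theory of unital C*-algebras.  The minimal tensor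
norm predicate `P^min` is `T`-definable if and only if it commutes with ultraproducts of
models of `T`, and in this case each `P^min_n` is `T`-equivalent to a quantifier-free
`T`-formula (i.e. it is realized by quantifier-free formulas up to arbitrarily small
error, uniformly over models of `T`). -/
theorem minNorm_definable_iff (T : CStarTheory) :
    (MinDefinableOver T ↔ MinUltraContinuous T) ∧
    (MinDefinableOver T →
      ∀ (n : ℕ) (ε : ℝ), 0 < ε → ∃ phi : Formula (n + n), phi.IsQF ∧
        ∀ (A : Type) [CStarAlgebra A], Models A T →
          ∀ a b : Fin n → A, (∀ k, ‖a k‖ ≤ 1) → (∀ k, ‖b k‖ ≤ 1) →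
            |minNorm A A (∑ k, a k ⊗ₜ[ℂ] b k) - phi.interp A (Fin.append a b)| ≤ ε) := by
  have key : MinUltraContinuous T → ∀ (n : ℕ) (ε : ℝ), 0 < ε →
      ∃ phi : Formula (n + n), phi.IsQF ∧
        ∀ (A : Type) [CStarAlgebra A], Models A T →
          ∀ a b : Fin n → A, (∀ k, ‖a k‖ ≤ 1) → (∀ k, ‖b k‖ ≤ 1) →
            |minNorm A A (∑ k, a k ⊗ₜ[ℂ] b k) - phi.interp A (Fin.append a b)| ≤ ε := by
    intro hT n ε hε
    obtain ⟨φ, hφ, h⟩ := ModelTuple.exists_isQF hT n hε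
    exact ⟨φ, hφ, fun A _ hA a b ha hb => h ⟨A, hA, a, b, ha, hb⟩⟩
  refine ⟨⟨fun hT => hT.minUltraContinuous, fun hT n ε hε => ?_⟩,
    fun hT => key hT.minUltraContinuous⟩
  obtain ⟨φ, -, h⟩ := key hT n ε hε
  exact ⟨φ, h⟩

end
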